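/- Let n ≥ 1 and n/(n+1) < q < p ≤ 1, fix ψ as in the context, and let Ω ⊆ ℝⁿ be a bounded domain whose complement is uniformly q-fat, i.e. there is c > 0 such that cap_q( Ωᶜ ∩ cl(B(x,r)) ; B(x,2r) ) ≥ c·r^{n−q} for every x ∈ Ωᶜ and every r > 0. Then there is a finite constant C = C(p,q,n,c,Ω,ψ) such that every smooth u : ℝⁿ → ℝ with compact support contained in Ω satisfies ∫_Ω ( |u(x)| / dist(x,∂Ω) )^p dx ≤ C · Σ_{j=1}^n ‖ sup_{t>0} |(∂_j u) * ψ_t| ‖_{L^p(ℝⁿ)}^p. -/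

import Mathlib

open MeasureTheory Metric Set ENNReal NNReal

noncomputable section

/-- The partial derivative `∂_j φ` in the `j`-th coordinate direction. -/
def pderivIdx (n : ℕ) (j : Fin n) (φ : EuclideanSpace ℝ (Fin n) → ℝ)
    (x : EuclideanSpace ℝ (Fin n)) : ℝ :=
  fderiv ℝ φ x (EuclideanSpace.single j 1)

/-- `sup_{t>0} |(∂_j u) * ψ_t|(x)`, the smooth maximal function of the partial
derivative of a differentiable function `u`, where `ψ_t(z) = t^{-n} ψ(z/t)`. -/
def convMax (n : ℕ) (ψ u : EuclideanSpace ℝ (Fin n) → ℝ) (j : Fin n)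
    (x : EuclideanSpace ℝ (Fin n)) : ℝ≥0∞ :=
  ⨆ (t : {s : ℝ // 0 < s}),
    ENNReal.ofReal |∫ y, pderivIdx n j u y * ((t.1⁻¹) ^ n * ψ (t.1⁻¹ • (x - y)))|

/-- The Hardy `q`-capacity of `K` relative to `U`:
`cap_q(K;U) = inf { Σ_j ‖sup_{t>0} |(∂_jφ) * ψ_t|‖_{L^q}^q : φ ∈ C_0^∞(U), φ ≥ 1 on K }`. -/
def hardyCap (n : ℕ) (ψ : EuclideanSpace ℝ (Fin n) → ℝ) (q : ℝ)
    (K U : Set (EuclideanSpace ℝ (Fin n))) : ℝ≥0∞ :=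
  sInf {r : ℝ≥0∞ | ∃ φ : EuclideanSpace ℝ (Fin n) → ℝ,
    ContDiff ℝ (⊤ : ℕ∞) φ ∧ HasCompactSupport φ ∧ tsupport φ ⊆ U ∧ (∀ x ∈ K, 1 ≤ φ x) ∧
    r = ∑ j : Fin n, ∫⁻ x, convMax n ψ φ j x ^ q}

/-- Euclidean space, abbreviated. -/
abbrev Eu (n : ℕ) := EuclideanSpace ℝ (Fin n)

/-- Volume of the closed unit ball. -/
def ubv (n : ℕ) : ℝ := (volume : Measure (Eu n)).real (closedBall 0 1)

lemma ubv_pos (n : ℕ) : 0 < ubv n := by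
  unfold ubv
  exact ENNReal.toReal_pos (measure_closedBall_pos volume _ one_pos).ne'
    measure_closedBall_lt_top.ne

lemma vol_cball {n : ℕ} (x : Eu n) {r : ℝ} (hr : 0 < r) :
    volume (closedBall x r) = ENNReal.ofReal (ubv n * r ^ n) := by
  have h := Measure.addHaar_closedBall_mul_of_pos (volume : Measure (Eu n)) x hr 1
  rw [mul_one] at h
  rw [h, finrank_euclideanSpace_fin, mul_comm, ENNReal.ofReal_mul (ubv_pos n).le]
  unfold ubv
  rw [ofReal_measureReal measure_closedBall_lt_top.ne]

lemma volr_cball {n : ℕ} (x : Eu n) {r : ℝ} (hr : 0 < r) :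
    volume.real (closedBall x r) = ubv n * r ^ n := by
  rw [Measure.real, vol_cball x hr, ENNReal.toReal_ofReal]
  have := ubv_pos n
  positivity

/-- Centred Hardy-Littlewood maximal function (normalised by `R ^ n`). -/
def hlMax {n : ℕ} (f : Eu n → ℝ≥0∞) (x : Eu n) : ℝ≥0∞ :=
  ⨆ R : {s : ℝ // 0 < s}, ENNReal.ofReal ((R.1⁻¹) ^ n) * ∫⁻ y in closedBall x R.1, f y

lemma lintegral_cball_le_hlMax {n : ℕ} (f : Eu n → ℝ≥0∞) (x : Eu n) {R : ℝ} (hR : 0 < R) :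
    ∫⁻ y in closedBall x R, f y ≤ ENNReal.ofReal (R ^ n) * hlMax f x := by
  have h : ENNReal.ofReal ((R⁻¹) ^ n) * ∫⁻ y in closedBall x R, f y ≤ hlMax f x :=
    le_iSup (fun R : {s : ℝ // 0 < s} =>
      ENNReal.ofReal ((R.1⁻¹) ^ n) * ∫⁻ y in closedBall x R.1, f y) ⟨R, hR⟩
  calc ∫⁻ y in closedBall x R, f y
      = ENNReal.ofReal (R ^ n) * (ENNReal.ofReal ((R⁻¹) ^ n) * ∫⁻ y in closedBall x R, f y) := by
        rw [← mul_assoc, ← ENNReal.ofReal_mul (by positivity), ← mul_pow, mul_inv_cancel₀ hR.ne']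
        simp
    _ ≤ _ := by gcongr

lemma exists_of_lt_hlMax {n : ℕ} {f : Eu n → ℝ≥0∞} {l : ℝ≥0∞} {x : Eu n} (h : l < hlMax f x) :
    ∃ R : {s : ℝ // 0 < s}, l < ENNReal.ofReal ((R.1⁻¹) ^ n) * ∫⁻ y in closedBall x R.1, f y := by
  unfold hlMax at h
  exact lt_iSup_iff.1 h

lemma isOpen_hlMax_gt {n : ℕ} (f : Eu n → ℝ≥0∞) (l : ℝ≥0∞) : IsOpen {x | l < hlMax f x} := by
  rw [Metric.isOpen_iff]
  intro x hx
  obtain ⟨⟨R, hR⟩, hlt⟩ := exists_of_lt_hlMax hx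
  simp only at hlt
  have hne : ENNReal.ofReal ((R⁻¹) ^ n) ≠ 0 := by
    rw [Ne, ENNReal.ofReal_eq_zero, not_le]; positivity
  have hc : Filter.Tendsto (fun r : ℝ => ENNReal.ofReal ((r⁻¹) ^ n) * ∫⁻ y in closedBall x R, f y)
      (nhdsWithin R (Ioi R)) (nhds (ENNReal.ofReal ((R⁻¹) ^ n) * ∫⁻ y in closedBall x R, f y)) := by
    refine ENNReal.Tendsto.mul_const ?_ (Or.inl hne)
    refine (ENNReal.continuous_ofReal.tendsto _).comp ?_
    refine Filter.Tendsto.mono_left ?_ nhdsWithin_le_nhds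
    exact ((continuousAt_inv₀ hR.ne').pow n)
  obtain ⟨r, hr1, hr2⟩ := ((hc.eventually (lt_mem_nhds hlt)).and self_mem_nhdsWithin).exists
  have hr2 : R < r := hr2
  refine ⟨r - R, by linarith, fun y hy => ?_⟩
  have hrp : 0 < r := hR.trans hr2
  refine lt_of_lt_of_le (hr1.trans_le ?_) (le_iSup _ (⟨r, hrp⟩ : {s : ℝ // 0 < s}))
  simp only
  gcongr
  rw [mem_ball, dist_comm] at hy
  exact closedBall_subset_closedBall' (by linarith)

lemma measurable_hlMax {n : ℕ} (f : Eu n → ℝ≥0∞) : Measurable (hlMax f) :=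
  measurable_of_Ioi fun l => (isOpen_hlMax_gt f l).measurableSet

lemma hl_weak {n : ℕ} (hn : 1 ≤ n) (f : Eu n → ℝ≥0∞) {l : ℝ} (hl : 0 < l) :
    volume {x | ENNReal.ofReal l < hlMax f x} ≤
      ENNReal.ofReal (ubv n * 5 ^ n / l) * ∫⁻ y, f y := by
  have hb := ubv_pos n
  by_cases hf : ∫⁻ y, f y = ⊤
  · rw [hf, ENNReal.mul_top]
    · exact le_top
    · rw [Ne, ENNReal.ofReal_eq_zero, not_le]; positivity
  have hex : ∀ x : Eu n, ∃ R : ℝ, x ∈ {x | ENNReal.ofReal l < hlMax f x} → 0 < R ∧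
      ENNReal.ofReal (l * R ^ n) ≤ ∫⁻ y in closedBall x R, f y := by
    intro x
    by_cases hx : x ∈ {x | ENNReal.ofReal l < hlMax f x}
    · obtain ⟨⟨R, hR⟩, hlt⟩ := exists_of_lt_hlMax hx
      refine ⟨R, fun _ => ⟨hR, ?_⟩⟩
      simp only at hlt
      rw [ENNReal.ofReal_mul hl.le, mul_comm]
      calc ENNReal.ofReal (R ^ n) * ENNReal.ofReal l
          ≤ ENNReal.ofReal (R ^ n) *
            (ENNReal.ofReal ((R⁻¹) ^ n) * ∫⁻ y in closedBall x R, f y) := by gcongr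
        _ = _ := by
          rw [← mul_assoc, ← ENNReal.ofReal_mul (by positivity), ← mul_pow, mul_inv_cancel₀ hR.ne']
          simp
    · exact ⟨0, fun h => absurd h hx⟩
  choose R hR using hex
  set S := {x | ENNReal.ofReal l < hlMax f x} with hS
  have hbd : ∀ a ∈ S, R a ≤ 1 + (∫⁻ y, f y).toReal / l := by
    intro a ha
    obtain ⟨h1, h2⟩ := hR a ha
    have h3 : ENNReal.ofReal (l * R a ^ n) ≤ ∫⁻ y, f y := h2.trans (setLIntegral_le_lintegral _ _)
    have h4 : l * R a ^ n ≤ (∫⁻ y, f y).toReal := by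
      rwa [ENNReal.ofReal_le_iff_le_toReal hf] at h3
    have h5 : R a ^ n ≤ (∫⁻ y, f y).toReal / l := by
      rw [le_div_iff₀ hl]; linarith
    by_cases h6 : R a ≤ 1
    · have : 0 ≤ (∫⁻ y, f y).toReal / l := by positivity
      linarith
    · have : R a ≤ R a ^ n := le_self_pow₀ (le_of_lt (not_le.1 h6)) (by omega)
      linarith
  obtain ⟨U, hUS, hdisj, hcov⟩ := Vitali.exists_disjoint_subfamily_covering_enlargement_closedBall
    S (fun a => a) R _ hbd 5 (by norm_num)
  have hUc : U.Countable := hdisj.countable_of_nonempty_interior fun a ha => by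
    have h1 := (hR a (hUS ha)).1
    exact ⟨a, ball_subset_interior_closedBall (mem_ball_self h1)⟩
  have hcov2 : S ⊆ ⋃ b ∈ U, closedBall b (5 * R b) := by
    intro a ha
    obtain ⟨b, hb, hab⟩ := hcov a ha
    exact mem_biUnion hb (hab (mem_closedBall_self (hR a ha).1.le))
  calc volume S ≤ volume (⋃ b ∈ U, closedBall b (5 * R b)) := measure_mono hcov2
    _ ≤ ∑' b : U, volume (closedBall b.1 (5 * R b.1)) := measure_biUnion_le _ hUc _
    _ ≤ ∑' b : U, ENNReal.ofReal (ubv n * 5 ^ n / l) * ∫⁻ y in closedBall b.1 (R b.1), f y := by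
        refine ENNReal.tsum_le_tsum fun b => ?_
        obtain ⟨h1, h2⟩ := hR b.1 (hUS b.2)
        rw [vol_cball _ (by positivity)]
        calc ENNReal.ofReal (ubv n * (5 * R b.1) ^ n)
            = ENNReal.ofReal (ubv n * 5 ^ n / l) * ENNReal.ofReal (l * R b.1 ^ n) := by
              rw [← ENNReal.ofReal_mul (by positivity)]
              congr 1
              field_simp
              ring
          _ ≤ _ := by gcongr
    _ = ENNReal.ofReal (ubv n * 5 ^ n / l) * ∑' b : U, ∫⁻ y in closedBall b.1 (R b.1), f y :=
        ENNReal.tsum_mul_left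
    _ = ENNReal.ofReal (ubv n * 5 ^ n / l) * ∫⁻ y in ⋃ b ∈ U, closedBall b (R b), f y := by
        rw [lintegral_biUnion hUc (fun _ _ => measurableSet_closedBall) hdisj]
    _ ≤ _ := by
        gcongr
        exact Measure.restrict_le_self

lemma hl_strong {n : ℕ} (hn : 1 ≤ n) {s : ℝ} (hs : 1 < s) : ∃ C : ℝ, 0 < C ∧
    ∀ g : Eu n → ℝ, Measurable g → (∀ x, 0 ≤ g x) → (∃ B, ∀ x, g x ≤ B) →
    ∫⁻ x, hlMax (fun y => ENNReal.ofReal (g y)) x ^ s ≤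
      ENNReal.ofReal C * ∫⁻ x, ENNReal.ofReal (g x) ^ s := by
  have hb := ubv_pos n
  refine ⟨s * (2 * ubv n * 5 ^ n) / (s - 1) * (2 * ubv n) ^ (s - 1), ?_, ?_⟩
  · have : 0 < s - 1 := by linarith
    positivity
  intro g hg hg0 ⟨B, hB⟩
  set f : Eu n → ℝ≥0∞ := fun y => ENNReal.ofReal (g y) with hfdef
  have hfm : Measurable f := hg.ennreal_ofReal
  have hfin : ∀ x, hlMax f x ≤ ENNReal.ofReal (B * ubv n) := by
    intro x
    refine iSup_le fun ⟨R, hR⟩ => ?_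
    simp only
    calc ENNReal.ofReal ((R⁻¹) ^ n) * ∫⁻ y in closedBall x R, f y
        ≤ ENNReal.ofReal ((R⁻¹) ^ n) * ∫⁻ y in closedBall x R, ENNReal.ofReal B := by
          gcongr with y
          exact ENNReal.ofReal_le_ofReal (hB y)
      _ = ENNReal.ofReal (B * ubv n) := by
          have hB0 : 0 ≤ B := (hg0 0).trans (hB 0)
          rw [setLIntegral_const, vol_cball _ hR, ← ENNReal.ofReal_mul hB0,
            ← ENNReal.ofReal_mul (by positivity)]
          congr 1
          rw [inv_pow]
          field_simp
  have hlt : ∀ x, hlMax f x ≠ ⊤ := fun x => ne_top_of_le_ne_top ENNReal.ofReal_ne_top (hfin x)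
  have hmeas : ∀ l : ℝ, 0 < l → volume {x | l < (hlMax f x).toReal} ≤
      ENNReal.ofReal (2 * ubv n * 5 ^ n / l) * ∫⁻ y in {y | l < 2 * ubv n * g y}, f y := by
    intro l hl
    have hset : MeasurableSet {y | l < 2 * ubv n * g y} :=
      measurableSet_lt measurable_const (hg.const_mul _)
    have hsub : {x | l < (hlMax f x).toReal} ⊆
        {x | ENNReal.ofReal (l / 2) < hlMax (indicator {y | l < 2 * ubv n * g y} f) x} := by
      intro x hx
      have hx1 : ENNReal.ofReal l < hlMax f x := by
        rw [ENNReal.ofReal_lt_iff_lt_toReal hl.le (hlt x)]; exact hx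
      have hx2 : hlMax f x ≤
          hlMax (indicator {y | l < 2 * ubv n * g y} f) x + ENNReal.ofReal (l / 2) := by
        refine iSup_le fun ⟨R, hR⟩ => ?_
        simp only
        calc ENNReal.ofReal ((R⁻¹) ^ n) * ∫⁻ y in closedBall x R, f y
            ≤ ENNReal.ofReal ((R⁻¹) ^ n) * ∫⁻ y in closedBall x R,
                (indicator {y | l < 2 * ubv n * g y} f y + ENNReal.ofReal (l / (2 * ubv n))) := by
              gcongr with y
              by_cases hy : l < 2 * ubv n * g y
              · rw [indicator_of_mem (by exact hy)]; exact le_self_add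
              · rw [indicator_of_notMem (by exact hy), zero_add]
                refine ENNReal.ofReal_le_ofReal ?_
                rw [le_div_iff₀ (by positivity)]
                linarith
          _ = ENNReal.ofReal ((R⁻¹) ^ n) *
                (∫⁻ y in closedBall x R, indicator {y | l < 2 * ubv n * g y} f y) +
                ENNReal.ofReal (l / 2) := by
              rw [lintegral_add_right _ measurable_const, mul_add, setLIntegral_const,
                vol_cball _ hR, ← ENNReal.ofReal_mul (by positivity),
                ← ENNReal.ofReal_mul (by positivity)]
              congr 2
              rw [inv_pow]
              field_simp
          _ ≤ _ := by
              gcongr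
              exact le_iSup (fun R : {s : ℝ // 0 < s} => ENNReal.ofReal ((R.1⁻¹) ^ n) *
                ∫⁻ y in closedBall x R.1, indicator {y | l < 2 * ubv n * g y} f y) ⟨R, hR⟩
      by_contra hcon
      have hcon : hlMax (indicator {y | l < 2 * ubv n * g y} f) x ≤ ENNReal.ofReal (l / 2) :=
        not_lt.1 hcon
      have : hlMax f x ≤ ENNReal.ofReal l := by
        refine hx2.trans ?_
        refine (add_le_add_left hcon _).trans ?_
        rw [← ENNReal.ofReal_add (by positivity) (by positivity)]
        simp
      exact absurd hx1 (not_lt.2 this)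
    refine (measure_mono hsub).trans ((hl_weak hn _ (half_pos hl)).trans (le_of_eq ?_))
    rw [lintegral_indicator hset]
    congr 2
    field_simp
  have hmm : Measurable fun x => (hlMax f x).toReal := (measurable_hlMax f).ennreal_toReal
  have e1 : ∫⁻ x, hlMax f x ^ s = ∫⁻ x, ENNReal.ofReal ((hlMax f x).toReal ^ s) := by
    refine lintegral_congr fun x => ?_
    rw [← ENNReal.ofReal_rpow_of_nonneg ENNReal.toReal_nonneg (by linarith),
      ENNReal.ofReal_toReal (hlt x)]
  have e2 := lintegral_rpow_eq_lintegral_meas_lt_mul volume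
    (Filter.Eventually.of_forall fun x => (ENNReal.toReal_nonneg : 0 ≤ (hlMax f x).toReal))
    hmm.aemeasurable (show 0 < s by linarith)
  have e3 := lintegral_rpow_eq_lintegral_meas_lt_mul (volume.withDensity f)
    (f := fun y => 2 * ubv n * g y)
    (Filter.Eventually.of_forall fun x => (mul_nonneg (by positivity) (hg0 x)))
    (hg.const_mul _).aemeasurable (show 0 < s - 1 by linarith)
  have hset : ∀ l : ℝ, MeasurableSet {y | l < 2 * ubv n * g y} := fun l =>
      measurableSet_lt measurable_const (hg.const_mul _)
  have hs1 : 0 < s - 1 := by linarith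
  calc ∫⁻ x, hlMax f x ^ s
      = ENNReal.ofReal s * ∫⁻ t in Ioi 0, volume {a | t < (hlMax f a).toReal} *
          ENNReal.ofReal (t ^ (s - 1)) := by rw [e1, e2]
    _ ≤ ENNReal.ofReal s * ∫⁻ t in Ioi (0 : ℝ), ENNReal.ofReal (2 * ubv n * 5 ^ n) *
          ((volume.withDensity f) {y | t < 2 * ubv n * g y} *
            ENNReal.ofReal (t ^ (s - 1 - 1))) := by
        gcongr ENNReal.ofReal s * ?_
        refine setLIntegral_mono' measurableSet_Ioi fun t ht => ?_
        have ht : 0 < t := ht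
        rw [withDensity_apply _ (hset t)]
        calc _ ≤ ENNReal.ofReal (2 * ubv n * 5 ^ n / t) * (∫⁻ y in {y | t < 2 * ubv n * g y}, f y)
              * ENNReal.ofReal (t ^ (s - 1)) := by gcongr; exact hmeas t ht
          _ = (ENNReal.ofReal (2 * ubv n * 5 ^ n / t) * ENNReal.ofReal (t ^ (s - 1))) *
              (∫⁻ y in {y | t < 2 * ubv n * g y}, f y) := by ring
          _ = (ENNReal.ofReal (2 * ubv n * 5 ^ n) * ENNReal.ofReal (t ^ (s - 1 - 1))) *
              (∫⁻ y in {y | t < 2 * ubv n * g y}, f y) := by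
            rw [← ENNReal.ofReal_mul (by positivity), ← ENNReal.ofReal_mul (by positivity)]
            congr 2
            rw [Real.rpow_sub_one ht.ne' (s - 1)]
            ring
          _ = _ := by ring
    _ = ENNReal.ofReal s * (ENNReal.ofReal (2 * ubv n * 5 ^ n) *
          ∫⁻ t in Ioi (0 : ℝ), ((volume.withDensity f) {y | t < 2 * ubv n * g y} *
            ENNReal.ofReal (t ^ (s - 1 - 1)))) := by
        rw [lintegral_const_mul' _ _ ENNReal.ofReal_ne_top]
    _ = ENNReal.ofReal (s * (2 * ubv n * 5 ^ n) / (s - 1)) * (ENNReal.ofReal (s - 1) *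
          ∫⁻ t in Ioi (0 : ℝ), ((volume.withDensity f) {y | t < 2 * ubv n * g y} *
            ENNReal.ofReal (t ^ (s - 1 - 1)))) := by
        rw [← mul_assoc, ← mul_assoc, ← ENNReal.ofReal_mul (by positivity),
          ← ENNReal.ofReal_mul (by positivity)]
        congr 2
        field_simp
    _ = ENNReal.ofReal (s * (2 * ubv n * 5 ^ n) / (s - 1)) *
          ∫⁻ x, ENNReal.ofReal ((2 * ubv n * g x) ^ (s - 1)) ∂(volume.withDensity f) := by
        rw [e3]
    _ = ENNReal.ofReal (s * (2 * ubv n * 5 ^ n) / (s - 1)) *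
          ∫⁻ x, f x * ENNReal.ofReal ((2 * ubv n * g x) ^ (s - 1)) := by
        rw [lintegral_withDensity_eq_lintegral_mul _ hfm]
        · rfl
        · exact ((hg.const_mul _).pow_const _).ennreal_ofReal
    _ = ENNReal.ofReal (s * (2 * ubv n * 5 ^ n) / (s - 1)) *
          ∫⁻ x, ENNReal.ofReal ((2 * ubv n) ^ (s - 1)) * f x ^ s := by
        congr 1
        refine lintegral_congr fun x => ?_
        have h1 : f x ^ s = ENNReal.ofReal (g x ^ s) :=
          ENNReal.ofReal_rpow_of_nonneg (hg0 x) (by linarith)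
        rw [h1, ← ENNReal.ofReal_mul (hg0 x), ← ENNReal.ofReal_mul (by positivity),
          Real.mul_rpow (by positivity) (hg0 x)]
        congr 1
        have h2 : g x ^ s = g x * g x ^ (s - 1) := by
          rcases (hg0 x).eq_or_lt with h | h
          · rw [← h, Real.zero_rpow (by linarith)]; simp
          · rw [Real.rpow_sub_one h.ne']; field_simp
        rw [h2]; ring
    _ = _ := by
        rw [lintegral_const_mul' _ _ ENNReal.ofReal_ne_top, ← mul_assoc,
          ← ENNReal.ofReal_mul (by positivity)]

/-- First-order oscillation integral. -/
def oscI {n : ℕ} (u : Eu n → ℝ) (x : Eu n) (t : ℝ) : ℝ := ∫ y in closedBall x t, |u y - u x|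

/-- Calderon-type maximal function. -/
def sharp {n : ℕ} (u : Eu n → ℝ) (x : Eu n) : ℝ :=
  ⨆ t : {s : ℝ // 0 < s}, (t.1⁻¹) ^ (n + 1) * oscI u x t.1

lemma intOn_cball {n : ℕ} {f : Eu n → ℝ} (hf : Continuous f) (x : Eu n) (t : ℝ) :
    IntegrableOn f (closedBall x t) :=
  hf.continuousOn.integrableOn_compact (isCompact_closedBall x t)

lemma oscI_nonneg {n : ℕ} (u : Eu n → ℝ) (x : Eu n) (t : ℝ) : 0 ≤ oscI u x t :=
  integral_nonneg fun _ => abs_nonneg _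

lemma oscI_le_of_lip {n : ℕ} {u : Eu n → ℝ} {L : ℝ≥0} (hL : LipschitzWith L u) (x : Eu n)
    {t : ℝ} (ht : 0 < t) : oscI u x t ≤ L * ubv n * t ^ (n + 1) := by
  have h := norm_setIntegral_le_of_norm_le_const (μ := volume) (s := closedBall x t)
    (f := fun y => |u y - u x|) (C := L * t) measure_closedBall_lt_top (by
      intro y hy
      rw [Real.norm_eq_abs, abs_abs]
      have h1 := hL.dist_le_mul y x
      rw [Real.dist_eq] at h1
      refine h1.trans ?_
      gcongr
      exact hy)
  rw [volr_cball x ht] at h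
  refine (le_abs_self _).trans (h.trans (le_of_eq ?_))
  ring

lemma sharp_bdd {n : ℕ} {u : Eu n → ℝ} {L : ℝ≥0} (hL : LipschitzWith L u) (x : Eu n)
    (t : {s : ℝ // 0 < s}) : (t.1⁻¹) ^ (n + 1) * oscI u x t.1 ≤ L * ubv n := by
  obtain ⟨t, ht⟩ := t
  calc (t⁻¹) ^ (n + 1) * oscI u x t ≤ (t⁻¹) ^ (n + 1) * (L * ubv n * t ^ (n + 1)) := by
        gcongr; exact oscI_le_of_lip hL x ht
    _ = _ := by rw [inv_pow]; field_simp

lemma sharp_bddAbove {n : ℕ} {u : Eu n → ℝ} {L : ℝ≥0} (hL : LipschitzWith L u) (x : Eu n) :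
    BddAbove (range fun t : {s : ℝ // 0 < s} => (t.1⁻¹) ^ (n + 1) * oscI u x t.1) :=
  ⟨L * ubv n, by rintro _ ⟨t, rfl⟩; exact sharp_bdd hL x t⟩

instance : Nonempty {s : ℝ // 0 < s} := ⟨⟨1, one_pos⟩⟩

lemma sharp_le {n : ℕ} {u : Eu n → ℝ} {x : Eu n} {B : ℝ}
    (h : ∀ t : ℝ, 0 < t → oscI u x t ≤ t ^ (n + 1) * B) : sharp u x ≤ B := by
  refine ciSup_le fun ⟨t, ht⟩ => ?_
  calc (t⁻¹) ^ (n + 1) * oscI u x t ≤ (t⁻¹) ^ (n + 1) * (t ^ (n + 1) * B) := by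
        gcongr; exact h t ht
    _ = _ := by rw [inv_pow]; field_simp

lemma sharp_le_lip {n : ℕ} {u : Eu n → ℝ} {L : ℝ≥0} (hL : LipschitzWith L u) (x : Eu n) :
    sharp u x ≤ L * ubv n := ciSup_le (sharp_bdd hL x)

lemma sharp_nonneg {n : ℕ} (u : Eu n → ℝ) (x : Eu n) : 0 ≤ sharp u x :=
  Real.iSup_nonneg fun t => mul_nonneg (pow_nonneg (inv_nonneg.2 t.2.le) _) (oscI_nonneg _ _ _)

lemma oscI_le_sharp {n : ℕ} {u : Eu n → ℝ} {L : ℝ≥0} (hL : LipschitzWith L u) (x : Eu n)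
    {t : ℝ} (ht : 0 < t) : oscI u x t ≤ t ^ (n + 1) * sharp u x := by
  have h : (t⁻¹) ^ (n + 1) * oscI u x t ≤ sharp u x :=
    le_ciSup (sharp_bddAbove hL x) ⟨t, ht⟩
  calc oscI u x t = t ^ (n + 1) * ((t⁻¹) ^ (n + 1) * oscI u x t) := by
        rw [inv_pow]; field_simp
    _ ≤ _ := by gcongr

lemma osc_le_sharp {n : ℕ} {u : Eu n → ℝ} {L : ℝ≥0} (hL : LipschitzWith L u) {x y : Eu n}
    {t ρ : ℝ} (ht : 0 < t) (h : ρ + dist y x ≤ t) :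
    ∫ z in closedBall y ρ, |u z - u x| ≤ t ^ (n + 1) * sharp u x := by
  refine le_trans ?_ (oscI_le_sharp hL x ht)
  refine setIntegral_mono_set (intOn_cball ?_ x t) ?_ ?_
  · exact (hL.continuous.sub continuous_const).abs
  · exact Filter.Eventually.of_forall fun _ => abs_nonneg _
  · exact (closedBall_subset_closedBall' h).eventuallyLE

lemma continuous_oscI {n : ℕ} {u : Eu n → ℝ} (hu : Continuous u) (t : ℝ) :
    Continuous fun x => oscI u x t := by
  have h : (fun x => oscI u x t) = fun x => ∫ h in closedBall (0 : Eu n) t, |u (x + h) - u x| := by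
    funext x
    unfold oscI
    rw [← integral_indicator measurableSet_closedBall, ← integral_indicator measurableSet_closedBall,
      ← integral_add_left_eq_self _ x]
    congr 1
    funext y
    simp only [indicator, mem_closedBall, dist_zero_right, dist_self_add_left]
  rw [h]
  refine continuous_parametric_integral_of_continuous ?_ (isCompact_closedBall _ _)
  unfold Function.uncurry
  fun_prop

lemma measurable_sharp {n : ℕ} {u : Eu n → ℝ} {L : ℝ≥0} (hL : LipschitzWith L u) :
    Measurable (sharp u) := by
  refine measurable_of_Ioi fun l => IsOpen.measurableSet ?_
  have : sharp u ⁻¹' Ioi l = ⋃ t : {s : ℝ // 0 < s}, {x | l < (t.1⁻¹) ^ (n + 1) * oscI u x t.1} := by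
    ext x
    simp only [mem_preimage, mem_Ioi, mem_iUnion, mem_ofPred_eq]
    exact lt_ciSup_iff (sharp_bddAbove hL x)
  rw [this]
  refine isOpen_iUnion fun t => isOpen_lt continuous_const ?_
  exact continuous_const.mul (continuous_oscI hL.continuous _)

lemma sharp_decay {n : ℕ} {u : Eu n → ℝ} (hu : Continuous u) {a : Eu n} {ρ : ℝ} (hρ : 0 < ρ)
    (hs : ∀ y ∉ closedBall a ρ, u y = 0) {x : Eu n} (hx : 2 * ρ < dist x a) :
    sharp u x ≤ (2 / dist x a) ^ (n + 1) * ∫ y in closedBall a ρ, |u y| := by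
  have hd : 0 < dist x a := by linarith
  have hI : 0 ≤ ∫ y in closedBall a ρ, |u y| := integral_nonneg fun _ => abs_nonneg _
  have hux : u x = 0 := hs x (by rw [mem_closedBall]; linarith)
  refine sharp_le fun t ht => ?_
  unfold oscI
  simp only [hux, sub_zero]
  by_cases hc : t < dist x a / 2
  · have : ∫ y in closedBall x t, |u y| = 0 := by
      refine setIntegral_eq_zero_of_forall_eq_zero fun y hy => ?_
      rw [hs y, abs_zero]
      rw [mem_closedBall] at hy ⊢
      have := dist_triangle x y a
      rw [dist_comm x y] at this
      linarith
    rw [this]; positivity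
  · have hc : dist x a / 2 ≤ t := not_lt.1 hc
    have h1 : ∫ y in closedBall x t, |u y| ≤ ∫ y in closedBall a ρ, |u y| := by
      have e : ∫ y in closedBall a ρ, |u y| = ∫ y, |u y| := by
        refine setIntegral_eq_integral_of_forall_compl_eq_zero fun y hy => ?_
        rw [hs y hy, abs_zero]
      rw [e]
      refine setIntegral_le_integral ?_ (Filter.Eventually.of_forall fun _ => abs_nonneg _)
      have : IntegrableOn (fun y => |u y|) (closedBall a ρ) := intOn_cball hu.abs a ρ
      rw [integrableOn_iff_integrable_of_support_subset] at this
      · exact this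
      · intro y hy
        by_contra hcon
        exact hy (by simp [hs y hcon])
    refine h1.trans ?_
    rw [← mul_assoc, ← mul_pow]
    refine le_mul_of_one_le_left hI (one_le_pow₀ ?_)
    rw [mul_div_assoc', le_div_iff₀ hd]
    linarith

lemma lintegral_sharp_lt_top {n : ℕ} {u : Eu n → ℝ} {L : ℝ≥0} (hL : LipschitzWith L u)
    (hc : HasCompactSupport u) {p : ℝ} (hp : (n : ℝ) / (n + 1) < p) :
    ∫⁻ x, ENNReal.ofReal (sharp u x) ^ p < ⊤ := by
  have hp0 : 0 < p := lt_of_le_of_lt (by positivity) hp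
  obtain ⟨ρ0, hρ0⟩ := hc.isBounded.subset_closedBall (0 : Eu n)
  set ρ := max ρ0 1 with hρ
  have hρ1 : 1 ≤ ρ := le_max_right _ _
  have hs : ∀ y ∉ closedBall (0 : Eu n) ρ, u y = 0 := fun y hy => by
    by_contra hcon
    exact hy (closedBall_subset_closedBall (le_max_left _ _)
      (hρ0 (subset_tsupport _ (Function.mem_support.2 hcon))))
  have hI : 0 ≤ ∫ y in closedBall (0 : Eu n) ρ, |u y| := integral_nonneg fun _ => abs_nonneg _
  set K : ℝ := (1 + 2 * ρ) ^ (n + 1) * (L * ubv n) +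
    4 ^ (n + 1) * ∫ y in closedBall (0 : Eu n) ρ, |u y| with hK
  have hb := ubv_pos n
  have hK0 : 0 ≤ K := by positivity
  have hbound : ∀ x, sharp u x ≤ K * (1 + ‖x‖) ^ (-((n : ℝ) + 1)) := by
    intro x
    have hx1 : 0 < 1 + ‖x‖ := by positivity
    have e : (1 + ‖x‖) ^ (-((n : ℝ) + 1)) = ((1 + ‖x‖) ^ (n + 1))⁻¹ := by
      rw [Real.rpow_neg hx1.le]
      norm_cast
    rw [e, ← div_eq_mul_inv, le_div_iff₀ (by positivity)]
    by_cases hx : ‖x‖ ≤ 2 * ρ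
    · calc sharp u x * (1 + ‖x‖) ^ (n + 1) ≤ (L * ubv n) * (1 + 2 * ρ) ^ (n + 1) := by
            gcongr
            exact sharp_le_lip hL x
        _ ≤ K := by rw [hK, mul_comm]; exact le_add_of_nonneg_right (by positivity)
    · have hx : 2 * ρ < ‖x‖ := not_le.1 hx
      have hx0 : 0 < ‖x‖ := by linarith
      have h1 := sharp_decay hL.continuous (by linarith) hs (x := x) (by rwa [dist_zero_right])
      rw [dist_zero_right] at h1
      calc sharp u x * (1 + ‖x‖) ^ (n + 1)
          ≤ ((2 / ‖x‖) ^ (n + 1) * ∫ y in closedBall (0 : Eu n) ρ, |u y|) *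
            (2 * ‖x‖) ^ (n + 1) := by
            gcongr
            linarith
        _ = 4 ^ (n + 1) * ∫ y in closedBall (0 : Eu n) ρ, |u y| := by
            rw [mul_right_comm, ← mul_pow]
            congr 2
            field_simp
            norm_num
        _ ≤ K := by rw [hK]; exact le_add_of_nonneg_left (by positivity)
  have hpn : (n : ℝ) < p * (n + 1) := by
    rwa [div_lt_iff₀ (by positivity)] at hp
  calc ∫⁻ x, ENNReal.ofReal (sharp u x) ^ p
      ≤ ∫⁻ x : Eu n, ENNReal.ofReal (K ^ p) *
          ENNReal.ofReal ((1 + ‖x‖) ^ (-(p * ((n : ℝ) + 1)))) := by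
        refine lintegral_mono fun x => ?_
        rw [ENNReal.ofReal_rpow_of_nonneg (sharp_nonneg u x) hp0.le,
          ← ENNReal.ofReal_mul (by positivity)]
        refine ENNReal.ofReal_le_ofReal ?_
        calc sharp u x ^ p ≤ (K * (1 + ‖x‖) ^ (-((n : ℝ) + 1))) ^ p :=
              Real.rpow_le_rpow (sharp_nonneg u x) (hbound x) hp0.le
          _ = _ := by
              rw [Real.mul_rpow hK0 (by positivity), ← Real.rpow_mul (by positivity)]
              congr 2
              ring
    _ = ENNReal.ofReal (K ^ p) * ∫⁻ x : Eu n,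
          ENNReal.ofReal ((1 + ‖x‖) ^ (-(p * ((n : ℝ) + 1)))) :=
        lintegral_const_mul' _ _ ENNReal.ofReal_ne_top
    _ < ⊤ := by
        refine ENNReal.mul_lt_top ENNReal.ofReal_lt_top (finite_integral_one_add_norm ?_)
        rwa [finrank_euclideanSpace_fin]

/-- Hajlasz inequality. -/
lemma hajlasz {n : ℕ} {u : Eu n → ℝ} {L : ℝ≥0} (hL : LipschitzWith L u) (x y : Eu n) :
    |u x - u y| ≤ 2 ^ (n + 1) / ubv n * dist x y * (sharp u x + sharp u y) := by
  have hb := ubv_pos n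
  by_cases hxy : x = y
  · simp [hxy]
  have hd : 0 < dist x y := dist_pos.2 hxy
  set ρ := dist x y with hρ
  have h1 : ∫ z in closedBall x ρ, |u x - u y| = ubv n * ρ ^ n * |u x - u y| := by
    rw [setIntegral_const, volr_cball x hd, smul_eq_mul]
  have h2 : ∫ z in closedBall x ρ, |u x - u y| ≤
      ∫ z in closedBall x ρ, (|u z - u x| + |u z - u y|) := by
    refine setIntegral_mono_on (intOn_cball continuous_const x ρ) (intOn_cball ?_ x ρ)
      measurableSet_closedBall fun z _ => ?_
    · have := hL.continuous
      fun_prop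
    · have := abs_sub_le (u x) (u z) (u y)
      rw [abs_sub_comm (u x) (u z)] at this
      exact this
  rw [integral_add (intOn_cball (by have := hL.continuous; fun_prop) x ρ)
    (intOn_cball (by have := hL.continuous; fun_prop) x ρ), h1] at h2
  have h3 : ∫ z in closedBall x ρ, |u z - u x| ≤ (2 * ρ) ^ (n + 1) * sharp u x :=
    osc_le_sharp hL (by positivity) (by rw [dist_self]; linarith)
  have h4 : ∫ z in closedBall x ρ, |u z - u y| ≤ (2 * ρ) ^ (n + 1) * sharp u y :=
    osc_le_sharp hL (by positivity) (by linarith)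
  have h5 : ubv n * ρ ^ n * |u x - u y| ≤ (2 * ρ) ^ (n + 1) * (sharp u x + sharp u y) := by
    linarith
  have h6 : |u x - u y| ≤ (2 * ρ) ^ (n + 1) * (sharp u x + sharp u y) / (ubv n * ρ ^ n) := by
    rw [le_div_iff₀ (by positivity)]; linarith
  refine h6.trans (le_of_eq ?_)
  field_simp
  ring


/-- The regularised partial derivative appearing in `convMax`. -/
def kerF {n : ℕ} (ψ u : Eu n → ℝ) (j : Fin n) (t : ℝ) (x : Eu n) : ℝ :=
  ∫ y, pderivIdx n j u y * ((t⁻¹) ^ n * ψ (t⁻¹ • (x - y)))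

lemma abs_integral_mul_le {n : ℕ} {f K : Eu n → ℝ} (hf : Continuous f) {κ : ℝ}
    {a : Eu n} {R : ℝ} (hK : ∀ y, |K y| ≤ κ) (hS : ∀ y ∉ closedBall a R, K y = 0) :
    |∫ y, f y * K y| ≤ κ * ∫ y in closedBall a R, |f y| := by
  have e : ∫ y, f y * K y = ∫ y in closedBall a R, f y * K y := by
    symm
    refine setIntegral_eq_integral_of_forall_compl_eq_zero fun y hy => ?_
    rw [hS y hy, mul_zero]
  rw [e, ← integral_const_mul, ← Real.norm_eq_abs]
  refine (norm_integral_le_integral_norm _).trans ?_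
  refine integral_mono_of_nonneg (Filter.Eventually.of_forall fun _ => norm_nonneg _)
    ((intOn_cball hf.abs a R).const_mul κ) (Filter.Eventually.of_forall fun y => ?_)
  simp only [norm_mul, Real.norm_eq_abs]
  rw [mul_comm]
  gcongr
  exact hK y

lemma smul_mem_of_ne {n : ℕ} {ψ : Eu n → ℝ} (hψsupp : tsupport ψ ⊆ ball 0 1) {t : ℝ} (ht : 0 < t)
    {x y : Eu n} (hy : y ∉ closedBall x t) : t⁻¹ • (x - y) ∉ tsupport ψ := by
  intro h
  have h := hψsupp h
  rw [mem_ball_zero_iff, norm_smul, norm_inv, Real.norm_eq_abs, abs_of_pos ht,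
    ← dist_eq_norm, inv_mul_lt_iff₀ ht, mul_one, dist_comm] at h
  exact hy h.le

lemma psi_scale_zero {n : ℕ} {ψ : Eu n → ℝ} (hψsupp : tsupport ψ ⊆ ball 0 1) {t : ℝ} (ht : 0 < t)
    {x y : Eu n} (hy : y ∉ closedBall x t) : ψ (t⁻¹ • (x - y)) = 0 :=
  image_eq_zero_of_notMem_tsupport (smul_mem_of_ne hψsupp ht hy)

lemma dpsi_scale_zero {n : ℕ} {ψ : Eu n → ℝ} (hψsupp : tsupport ψ ⊆ ball 0 1) {t : ℝ} (ht : 0 < t)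
    (j : Fin n) {x y : Eu n} (hy : y ∉ closedBall x t) :
    pderivIdx n j ψ (t⁻¹ • (x - y)) = 0 := by
  unfold pderivIdx
  rw [fderiv_of_notMem_tsupport (𝕜 := ℝ) (smul_mem_of_ne hψsupp ht hy)]
  rfl

lemma continuous_pderivIdx {n : ℕ} {ψ : Eu n → ℝ} (hψ : ContDiff ℝ (⊤ : ℕ∞) ψ) (j : Fin n) :
    Continuous (pderivIdx n j ψ) := by
  unfold pderivIdx
  exact (hψ.continuous_fderiv (by simp)).clm_apply continuous_const

lemma hcs_of_supp {n : ℕ} {ψ : Eu n → ℝ} (hψsupp : tsupport ψ ⊆ ball 0 1) :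
    HasCompactSupport ψ :=
  HasCompactSupport.of_support_subset_isCompact (isCompact_closedBall (0 : Eu n) 1)
    ((subset_tsupport _).trans (hψsupp.trans ball_subset_closedBall))

lemma hcs_scale {n : ℕ} {g : Eu n → ℝ} {t : ℝ} {x : Eu n}
    (h : ∀ y ∉ closedBall x t, g y = 0) : HasCompactSupport g :=
  HasCompactSupport.intro (isCompact_closedBall x t) h

lemma kerF_eq {n : ℕ} {ψ u : Eu n → ℝ} (hψ : ContDiff ℝ (⊤ : ℕ∞) ψ)
    (hψsupp : tsupport ψ ⊆ ball 0 1) (hu : ContDiff ℝ (⊤ : ℕ∞) u) (j : Fin n)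
    {t : ℝ} (ht : 0 < t) (x : Eu n) (c : ℝ) :
    kerF ψ u j t x =
      ∫ y, (u y - c) * ((t⁻¹) ^ (n + 1) * pderivIdx n j ψ (t⁻¹ • (x - y))) := by
  have hg : Differentiable ℝ ψ := hψ.differentiable (by simp)
  have huD : Differentiable ℝ u := hu.differentiable (by simp)
  have hfd : ∀ y, HasFDerivAt (fun y => ψ (t⁻¹ • (x - y)))
      ((fderiv ℝ ψ (t⁻¹ • (x - y))).comp (t⁻¹ • (-ContinuousLinearMap.id ℝ (Eu n)))) y := by
    intro y
    have h1 : HasFDerivAt (fun y : Eu n => t⁻¹ • (x - y))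
        (t⁻¹ • (-ContinuousLinearMap.id ℝ (Eu n))) y :=
      ((hasFDerivAt_id y).const_sub x).const_smul t⁻¹
    exact (hg _).hasFDerivAt.comp y h1
  have hder : ∀ y, fderiv ℝ (fun y => ψ (t⁻¹ • (x - y))) y (EuclideanSpace.single j 1) =
      -(t⁻¹ * pderivIdx n j ψ (t⁻¹ • (x - y))) := by
    intro y
    rw [(hfd y).fderiv]
    simp [pderivIdx]
  have hfdu : ∀ y, fderiv ℝ (fun y => u y - c) y = fderiv ℝ u y := fun y => by
    rw [fderiv_sub_const]
  have hcψ : Continuous fun y : Eu n => ψ (t⁻¹ • (x - y)) := by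
    have := hψ.continuous
    fun_prop
  have hcdψ : Continuous fun y : Eu n => pderivIdx n j ψ (t⁻¹ • (x - y)) := by
    have := continuous_pderivIdx hψ j
    fun_prop
  have hcu := hu.continuous
  have hcdu := continuous_pderivIdx hu j
  have hz1 : ∀ y ∉ closedBall x t, ψ (t⁻¹ • (x - y)) = 0 := fun y hy => psi_scale_zero hψsupp ht hy
  have hz2 : ∀ y ∉ closedBall x t, pderivIdx n j ψ (t⁻¹ • (x - y)) = 0 :=
    fun y hy => dpsi_scale_zero hψsupp ht j hy
  have hbp := integral_mul_fderiv_eq_neg_fderiv_mul_of_integrable (μ := (volume : Measure (Eu n)))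
    (f := fun y => u y - c) (g := fun y => ψ (t⁻¹ • (x - y))) (v := EuclideanSpace.single j (1 : ℝ))
    (by
      simp only [hfdu]
      exact (hcdu.mul hcψ).integrable_of_hasCompactSupport
        (hcs_scale (x := x) (t := t) fun y hy => by simp [hz1 y hy]))
    (by
      simp only [hder]
      exact (Continuous.mul (by fun_prop) (by fun_prop)).integrable_of_hasCompactSupport
        (hcs_scale (x := x) (t := t) fun y hy => by simp [hz2 y hy]))
    (by
      exact (Continuous.mul (by fun_prop) (by fun_prop)).integrable_of_hasCompactSupport
        (hcs_scale (x := x) (t := t) fun y hy => by simp [hz1 y hy]))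
    (fun y _ => (huD y).sub_const c) (fun y _ => (hfd y).differentiableAt)
  simp only [hder, hfdu] at hbp
  unfold kerF
  have e1 : ∀ y, pderivIdx n j u y * ((t⁻¹) ^ n * ψ (t⁻¹ • (x - y))) =
      (t⁻¹) ^ n * ((fderiv ℝ u y) (EuclideanSpace.single j 1) * ψ (t⁻¹ • (x - y))) := fun y => by
    unfold pderivIdx; ring
  have e2 : ∀ y, (u y - c) * ((t⁻¹) ^ (n + 1) * pderivIdx n j ψ (t⁻¹ • (x - y))) =
      -((t⁻¹) ^ n) * ((u y - c) * -(t⁻¹ * pderivIdx n j ψ (t⁻¹ • (x - y)))) := fun y => by ring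
  simp only [e1, e2]
  rw [integral_const_mul, integral_const_mul, hbp]
  ring

lemma exists_ker_consts {n : ℕ} {ψ : Eu n → ℝ} (hψ : ContDiff ℝ (⊤ : ℕ∞) ψ)
    (hψsupp : tsupport ψ ⊆ ball 0 1) : ∃ D : ℝ, 0 < D ∧ (∀ y, |ψ y| ≤ D) ∧
      (∀ j y, |pderivIdx n j ψ y| ≤ D) ∧
      (∀ j y z, |pderivIdx n j ψ y - pderivIdx n j ψ z| ≤ D * dist y z) := by
  have hcs := hcs_of_supp hψsupp
  obtain ⟨D1, h1⟩ := hcs.exists_bound_of_continuous hψ.continuous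
  have h2 : ∀ j, ∃ D, ∀ y, |pderivIdx n j ψ y| ≤ D := fun j =>
    (hcs.fderiv_apply (𝕜 := ℝ) (EuclideanSpace.single j (1 : ℝ))).exists_bound_of_continuous
      (continuous_pderivIdx hψ j)
  have h3 : ∀ j, ∃ D : ℝ≥0, LipschitzWith D (pderivIdx n j ψ) := fun j =>
    ContDiff.lipschitzWith_of_hasCompactSupport (𝕂 := ℝ) (n := 1)
      (hcs.fderiv_apply (𝕜 := ℝ) (EuclideanSpace.single j (1 : ℝ)))
      ((hψ.fderiv_right (m := 1) (by
        norm_cast)).clm_apply contDiff_const) (by simp)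
  choose D2 h2 using h2
  choose D3 h3 using h3
  have hn2 : ∀ j, D2 j ≤ ∑ i, |D2 i| := fun j => (le_abs_self _).trans
    (Finset.single_le_sum (f := fun i => |D2 i|) (fun i _ => abs_nonneg _) (Finset.mem_univ j))
  have hn3 : ∀ j, (D3 j : ℝ) ≤ ∑ i, (D3 i : ℝ) := fun j =>
    (Finset.single_le_sum (f := fun i => (D3 i : ℝ)) (fun i _ => NNReal.coe_nonneg _)
      (Finset.mem_univ j))
  have p2 : 0 ≤ ∑ i, |D2 i| := Finset.sum_nonneg fun i _ => abs_nonneg _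
  have p3 : 0 ≤ ∑ i, (D3 i : ℝ) := Finset.sum_nonneg fun i _ => NNReal.coe_nonneg _
  have p1 : 0 ≤ |D1| := abs_nonneg _
  refine ⟨|D1| + ∑ i, |D2 i| + ∑ i, (D3 i : ℝ) + 1, by positivity, ?_, ?_, ?_⟩
  · intro y
    have := h1 y
    rw [Real.norm_eq_abs] at this
    linarith [le_abs_self D1]
  · intro j y
    linarith [h2 j y, hn2 j]
  · intro j y z
    have := (h3 j).dist_le_mul y z
    rw [Real.dist_eq] at this
    refine this.trans ?_
    gcongr
    linarith [hn3 j]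

lemma kerF_abs_le {n : ℕ} {ψ u : Eu n → ℝ} (hψ : ContDiff ℝ (⊤ : ℕ∞) ψ)
    (hψsupp : tsupport ψ ⊆ ball 0 1) (hu : ContDiff ℝ (⊤ : ℕ∞) u) {D : ℝ}
    (hD : ∀ j y, |pderivIdx n j ψ y| ≤ D) (j : Fin n)
    {t : ℝ} (ht : 0 < t) (x : Eu n) (c : ℝ) :
    |kerF ψ u j t x| ≤ ((t⁻¹) ^ (n + 1) * D) * ∫ y in closedBall x t, |u y - c| := by
  rw [kerF_eq hψ hψsupp hu j ht x c]
  refine abs_integral_mul_le (hu.continuous.sub continuous_const) (fun y => ?_) (fun y hy => ?_)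
  · rw [abs_mul, abs_of_pos (by positivity)]
    gcongr
    exact hD j _
  · rw [dpsi_scale_zero hψsupp ht j hy, mul_zero]

lemma kerF_lip {n : ℕ} {ψ u : Eu n → ℝ} (hψ : ContDiff ℝ (⊤ : ℕ∞) ψ)
    (hψsupp : tsupport ψ ⊆ ball 0 1) (hu : ContDiff ℝ (⊤ : ℕ∞) u) {D : ℝ}
    (hD : ∀ j y z, |pderivIdx n j ψ y - pderivIdx n j ψ z| ≤ D * dist y z) (j : Fin n)
    {t : ℝ} (ht : 0 < t) {z z' x : Eu n} {R : ℝ} (hz : t + dist z x ≤ R) (hz' : t + dist z' x ≤ R)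
    (c : ℝ) :
    |kerF ψ u j t z - kerF ψ u j t z'| ≤
      ((t⁻¹) ^ (n + 2) * D * dist z z') * ∫ y in closedBall x R, |u y - c| := by
  have hcdψ : ∀ x, Continuous fun y : Eu n => pderivIdx n j ψ (t⁻¹ • (x - y)) := by
    intro x
    have := continuous_pderivIdx hψ j
    fun_prop
  have hcu := hu.continuous
  have hintg : ∀ x, Integrable fun y =>
      (u y - c) * ((t⁻¹) ^ (n + 1) * pderivIdx n j ψ (t⁻¹ • (x - y))) := by
    intro x
    have := hcdψ x
    exact (Continuous.mul (by fun_prop) (by fun_prop)).integrable_of_hasCompactSupport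
        (hcs_scale (x := x) (t := t) fun y hy => by simp [dpsi_scale_zero hψsupp ht j hy])
  rw [kerF_eq hψ hψsupp hu j ht z c, kerF_eq hψ hψsupp hu j ht z' c,
    ← integral_sub (hintg z) (hintg z')]
  have e : ∀ y, (u y - c) * ((t⁻¹) ^ (n + 1) * pderivIdx n j ψ (t⁻¹ • (z - y))) -
      (u y - c) * ((t⁻¹) ^ (n + 1) * pderivIdx n j ψ (t⁻¹ • (z' - y))) =
      (u y - c) * ((t⁻¹) ^ (n + 1) * (pderivIdx n j ψ (t⁻¹ • (z - y)) -
        pderivIdx n j ψ (t⁻¹ • (z' - y)))) := fun y => by ring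
  simp only [e]
  refine abs_integral_mul_le (hu.continuous.sub continuous_const) (fun y => ?_) (fun y hy => ?_)
  · rw [abs_mul, abs_of_pos (show 0 < (t⁻¹) ^ (n + 1) by positivity)]
    have h := hD j (t⁻¹ • (z - y)) (t⁻¹ • (z' - y))
    rw [dist_smul₀, dist_sub_right, Real.norm_eq_abs, abs_of_pos (inv_pos.2 ht)] at h
    calc _ ≤ (t⁻¹) ^ (n + 1) * (D * (t⁻¹ * dist z z')) := by gcongr
      _ = _ := by ring
  · rw [dpsi_scale_zero hψsupp ht j, dpsi_scale_zero hψsupp ht j, sub_zero, mul_zero]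
    · exact fun h => hy (closedBall_subset_closedBall' hz' h)
    · exact fun h => hy (closedBall_subset_closedBall' hz h)

lemma convMax_le {n : ℕ} {ψ u : Eu n → ℝ} (hψ : ContDiff ℝ (⊤ : ℕ∞) ψ)
    (hψsupp : tsupport ψ ⊆ ball 0 1) (hu : ContDiff ℝ (⊤ : ℕ∞) u) {L : ℝ≥0}
    (hL : LipschitzWith L u) {D : ℝ} (hD0 : 0 ≤ D)
    (hD : ∀ j y, |pderivIdx n j ψ y| ≤ D) (j : Fin n) (x : Eu n) :
    convMax n ψ u j x ≤ ENNReal.ofReal (D * sharp u x) := by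
  refine iSup_le fun ⟨t, ht⟩ => ENNReal.ofReal_le_ofReal ?_
  refine (kerF_abs_le hψ hψsupp hu hD j ht x (u x)).trans ?_
  calc _ ≤ (t⁻¹) ^ (n + 1) * D * (t ^ (n + 1) * sharp u x) := by
        gcongr
        exact oscI_le_sharp hL x ht
    _ = _ := by rw [inv_pow]; field_simp

lemma kerF_le_convMax {n : ℕ} (ψ u : Eu n → ℝ) (j : Fin n) {t : ℝ} (ht : 0 < t) (x : Eu n) :
    ENNReal.ofReal |kerF ψ u j t x| ≤ convMax n ψ u j x :=
  le_iSup (fun t : {s : ℝ // 0 < s} => ENNReal.ofReal |∫ y, pderivIdx n j u y *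
    ((t.1⁻¹) ^ n * ψ (t.1⁻¹ • (x - y)))|) ⟨t, ht⟩

lemma continuous_kerF {n : ℕ} {ψ u : Eu n → ℝ} (hψ : ContDiff ℝ (⊤ : ℕ∞) ψ)
    (hψsupp : tsupport ψ ⊆ ball 0 1) (hu : ContDiff ℝ (⊤ : ℕ∞) u) (hc : HasCompactSupport u)
    (j : Fin n) (t : ℝ) : Continuous (kerF ψ u j t) := by
  have e : kerF ψ u j t = fun x => ∫ y in tsupport u,
      pderivIdx n j u y * ((t⁻¹) ^ n * ψ (t⁻¹ • (x - y))) := by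
    funext x
    unfold kerF
    symm
    refine setIntegral_eq_integral_of_forall_compl_eq_zero fun y hy => ?_
    unfold pderivIdx
    rw [fderiv_of_notMem_tsupport (𝕜 := ℝ) hy]
    simp
  rw [e]
  refine continuous_parametric_integral_of_continuous ?_ hc
  unfold Function.uncurry
  have := continuous_pderivIdx hu j
  have := hψ.continuous
  fun_prop

lemma measurable_convMax {n : ℕ} {ψ u : Eu n → ℝ} (hψ : ContDiff ℝ (⊤ : ℕ∞) ψ)
    (hψsupp : tsupport ψ ⊆ ball 0 1) (hu : ContDiff ℝ (⊤ : ℕ∞) u) (hc : HasCompactSupport u)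
    (j : Fin n) : Measurable (convMax n ψ u j) := by
  refine LowerSemicontinuous.measurable ?_
  refine lowerSemicontinuous_iSup fun t => ?_
  exact (ENNReal.continuous_ofReal.comp
    (continuous_kerF hψ hψsupp hu hc j t.1).abs).lowerSemicontinuous

/-- Mollification of `u` at scale `s`. -/
def moll {n : ℕ} (ψ u : Eu n → ℝ) (s : ℝ) (x : Eu n) : ℝ :=
  ∫ y, u y * ((s⁻¹) ^ n * ψ (s⁻¹ • (x - y)))

lemma integral_scale {n : ℕ} {ψ : Eu n → ℝ} (hψint : ∫ x, ψ x = 1) {s : ℝ} (hs : 0 < s)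
    (x : Eu n) : ∫ y, (s⁻¹) ^ n * ψ (s⁻¹ • (x - y)) = 1 := by
  rw [integral_const_mul, integral_sub_left_eq_self (fun y => ψ (s⁻¹ • y)) volume x,
    Measure.integral_comp_inv_smul_of_nonneg _ _ hs.le, finrank_euclideanSpace_fin, hψint]
  rw [inv_pow, smul_eq_mul, mul_one]
  field_simp

lemma moll_sub_le {n : ℕ} {ψ u : Eu n → ℝ} (hψ : ContDiff ℝ (⊤ : ℕ∞) ψ)
    (hψsupp : tsupport ψ ⊆ ball 0 1) (hψint : ∫ x, ψ x = 1) (hu : Continuous u) {D : ℝ}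
    (hD : ∀ y, |ψ y| ≤ D) {s : ℝ} (hs : 0 < s) (x : Eu n) (c : ℝ) :
    |moll ψ u s x - c| ≤ ((s⁻¹) ^ n * D) * ∫ y in closedBall x s, |u y - c| := by
  have hcψ : Continuous fun y : Eu n => ψ (s⁻¹ • (x - y)) := by
    have := hψ.continuous
    fun_prop
  have hi : ∀ f : Eu n → ℝ, Continuous f →
      Integrable fun y => f y * ((s⁻¹) ^ n * ψ (s⁻¹ • (x - y))) := fun f hf =>
    (Continuous.mul hf (by fun_prop)).integrable_of_hasCompactSupport
        (hcs_scale (x := x) (t := s) fun y hy => by simp [psi_scale_zero hψsupp hs hy])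
  have e : moll ψ u s x - c = ∫ y, (u y - c) * ((s⁻¹) ^ n * ψ (s⁻¹ • (x - y))) := by
    simp only [sub_mul]
    rw [integral_sub (hi u hu) (hi _ continuous_const), integral_const_mul,
      integral_scale hψint hs x, mul_one]
    rfl
  rw [e]
  refine abs_integral_mul_le (hu.sub continuous_const) (fun y => ?_) (fun y hy => ?_)
  · rw [abs_mul, abs_of_pos (by positivity)]
    gcongr
    exact hD _
  · rw [psi_scale_zero hψsupp hs hy, mul_zero]

lemma hasFDerivAt_moll {n : ℕ} {ψ u : Eu n → ℝ} (hψ : ContDiff ℝ (⊤ : ℕ∞) ψ)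
    (hu : ContDiff ℝ (⊤ : ℕ∞) u) (hc : HasCompactSupport u)
    (s : ℝ) (x : Eu n) : ∃ f' : Eu n →L[ℝ] ℝ, HasFDerivAt (moll ψ u s) f' x ∧
      ∀ j, f' (EuclideanSpace.single j 1) = kerF ψ u j s x := by
  have hcψ : Continuous fun y : Eu n => (s⁻¹) ^ n * ψ (s⁻¹ • y) := by
    have := hψ.continuous
    fun_prop
  have h := hc.hasFDerivAt_convolution_left (ContinuousLinearMap.mul ℝ ℝ) (𝕜 := ℝ)
    (μ := (volume : Measure (Eu n)))
    (hu.of_le (by norm_cast)) (g := fun y : Eu n => (s⁻¹) ^ n * ψ (s⁻¹ • y))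
    hcψ.locallyIntegrable x
  refine ⟨_, h, fun j => ?_⟩
  have hex := (hc.fderiv (𝕜 := ℝ)).convolutionExists_left
    ((ContinuousLinearMap.mul ℝ ℝ).precompL (Eu n)) (μ := (volume : Measure (Eu n)))
    (hu.continuous_fderiv (by simp)) hcψ.locallyIntegrable x
  rw [convolution_def, ContinuousLinearMap.integral_apply hex]
  rfl

lemma moll_diff_le {n : ℕ} {ψ u : Eu n → ℝ} (hψ : ContDiff ℝ (⊤ : ℕ∞) ψ)
    (hu : ContDiff ℝ (⊤ : ℕ∞) u) (hc : HasCompactSupport u)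
    (s : ℝ) {x y : Eu n} {t B : ℝ} (ht : 0 < t) (hB : ∀ z ∈ closedBall x t, ∑ j, |kerF ψ u j s z| ≤ B)
    (hy : y ∈ closedBall x t) : |moll ψ u s y - moll ψ u s x| ≤ B * t := by
  choose f' hf' hf'' using hasFDerivAt_moll hψ hu hc s
  have hB0 : 0 ≤ B := le_trans (Finset.sum_nonneg fun j _ => abs_nonneg _)
    (hB x (mem_closedBall_self ht.le))
  have hnorm : ∀ z ∈ closedBall x t, ‖f' z‖ ≤ B := by
    intro z hz
    refine ContinuousLinearMap.opNorm_le_bound _ hB0 fun v => ?_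
    have hv : v = ∑ j, v j • EuclideanSpace.single j (1 : ℝ) := by
      have := (EuclideanSpace.basisFun (Fin n) ℝ).sum_repr v
      simpa using this.symm
    have hv2 : f' z v = ∑ j, v j * kerF ψ u j s z := by
      conv_lhs => rw [hv]
      rw [map_sum]
      refine Finset.sum_congr rfl fun j _ => ?_
      rw [map_smul, hf'', smul_eq_mul]
    rw [hv2]
    calc ‖∑ j, v j * kerF ψ u j s z‖ ≤ ∑ j, ‖v j * kerF ψ u j s z‖ := norm_sum_le _ _
      _ ≤ ∑ j, ‖v‖ * |kerF ψ u j s z| := by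
          refine Finset.sum_le_sum fun j _ => ?_
          rw [norm_mul, Real.norm_eq_abs (kerF _ _ _ _ _)]
          gcongr
          exact PiLp.norm_apply_le v j
      _ = (∑ j, |kerF ψ u j s z|) * ‖v‖ := by rw [← Finset.mul_sum, mul_comm]
      _ ≤ B * ‖v‖ := by gcongr; exact hB z hz
  have h := (convex_closedBall x t).norm_image_sub_le_of_norm_hasFDerivWithin_le
    (f := moll ψ u s) (f' := f') (C := B)
    (fun z _ => (hf' z).hasFDerivWithinAt) hnorm (mem_closedBall_self ht.le) hy
  rw [Real.norm_eq_abs] at h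
  refine h.trans ?_
  gcongr
  rw [← dist_eq_norm]; exact hy

lemma continuous_moll {n : ℕ} {ψ u : Eu n → ℝ} (hψ : ContDiff ℝ (⊤ : ℕ∞) ψ)
    (hu : ContDiff ℝ (⊤ : ℕ∞) u) (hc : HasCompactSupport u) (s : ℝ) :
    Continuous (moll ψ u s) := by
  rw [continuous_iff_continuousAt]
  intro x
  obtain ⟨f', hf', _⟩ := hasFDerivAt_moll hψ hu hc s x
  exact hf'.continuousAt

lemma fubini_ball {n : ℕ} {H : Eu n → ℝ≥0∞} (hH : Measurable H) (x : Eu n) {s t : ℝ} (hs : 0 < s)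
    (hst : s ≤ t) : ENNReal.ofReal (ubv n * s ^ n) * ∫⁻ y in closedBall x t, H y ≤
      ∫⁻ w in closedBall x (2 * t), ∫⁻ y in closedBall w s, H y := by
  have hms : MeasurableSet {q : Eu n × Eu n | dist q.1 q.2 ≤ s} :=
    (isClosed_le (continuous_fst.dist continuous_snd) continuous_const).measurableSet
  have hm : Measurable fun q : Eu n × Eu n =>
      {q : Eu n × Eu n | dist q.1 q.2 ≤ s}.indicator (fun q => H q.1) q :=
    (hH.comp measurable_fst).indicator hms
  calc ENNReal.ofReal (ubv n * s ^ n) * ∫⁻ y in closedBall x t, H y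
      = ∫⁻ y in closedBall x t, ∫⁻ w,
          {q : Eu n × Eu n | dist q.1 q.2 ≤ s}.indicator (fun q => H q.1) (y, w) := by
        rw [← lintegral_const_mul _ hH]
        refine lintegral_congr fun y => ?_
        have : ∀ w, {q : Eu n × Eu n | dist q.1 q.2 ≤ s}.indicator (fun q => H q.1) (y, w) =
            (closedBall y s).indicator (fun _ => H y) w := by
          intro w
          simp only [indicator, mem_ofPred_eq, mem_closedBall, dist_comm w y]
        simp only [this]
        rw [lintegral_indicator measurableSet_closedBall, setLIntegral_const, vol_cball y hs,
          mul_comm]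
    _ = ∫⁻ w, ∫⁻ y in closedBall x t,
          {q : Eu n × Eu n | dist q.1 q.2 ≤ s}.indicator (fun q => H q.1) (y, w) :=
        lintegral_lintegral_swap hm.aemeasurable
    _ ≤ ∫⁻ w, (closedBall x (2 * t)).indicator (fun w => ∫⁻ y in closedBall w s, H y) w := by
        refine lintegral_mono fun w => ?_
        by_cases hw : w ∈ closedBall x (2 * t)
        · rw [indicator_of_mem hw]
          refine (setLIntegral_le_lintegral _ _).trans ?_
          rw [← lintegral_indicator measurableSet_closedBall]
          refine lintegral_mono fun y => ?_
          simp only [indicator, mem_ofPred_eq, mem_closedBall, le_refl]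
        · rw [indicator_of_notMem hw, nonpos_iff_eq_zero]
          refine setLIntegral_eq_zero measurableSet_closedBall fun y hy => ?_
          refine indicator_of_notMem (fun h => hw ?_) _
          have h : dist y w ≤ s := h
          rw [mem_closedBall] at hy ⊢
          have := dist_triangle w y x
          rw [dist_comm w y] at this
          linarith
    _ = _ := lintegral_indicator measurableSet_closedBall _

lemma T1_local {n : ℕ} {ψ u : Eu n → ℝ} (hψ : ContDiff ℝ (⊤ : ℕ∞) ψ)
    (hψsupp : tsupport ψ ⊆ ball 0 1) (hψint : ∫ x, ψ x = 1)
    (hu : ContDiff ℝ (⊤ : ℕ∞) u) (hc : HasCompactSupport u) {L : ℝ≥0} (hL : LipschitzWith L u)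
    {D : ℝ} (hD0 : 0 < D) (hD : ∀ y, |ψ y| ≤ D) {s : ℝ} (hs : 0 < s) {w w' : Eu n}
    (hw : dist w w' ≤ s) :
    ∫ y in closedBall w s, |u y - moll ψ u s y| ≤
      ((2 ^ (n + 1) + ubv n * D * 3 ^ (n + 1)) * s ^ (n + 1)) * sharp u w' := by
  have hcm := continuous_moll hψ hu hc s
  have hcu := hu.continuous
  have hb := ubv_pos n
  have h1 : ∀ y ∈ closedBall w s, |u y - moll ψ u s y| ≤
      |u y - u w'| + D * 3 ^ (n + 1) * s * sharp u w' := by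
    intro y hy
    rw [mem_closedBall] at hy
    have h2 := moll_sub_le hψ hψsupp hψint hcu hD hs y (u w')
    have h3 : ∫ z in closedBall y s, |u z - u w'| ≤ (3 * s) ^ (n + 1) * sharp u w' := by
      refine osc_le_sharp hL (by positivity) ?_
      have := dist_triangle y w w'
      linarith
    have h4 : |moll ψ u s y - u w'| ≤ D * 3 ^ (n + 1) * s * sharp u w' := by
      refine h2.trans ?_
      calc _ ≤ (s⁻¹) ^ n * D * ((3 * s) ^ (n + 1) * sharp u w') := by gcongr
        _ = _ := by rw [inv_pow]; field_simp; ring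
    have h5 := abs_sub_le (u y) (u w') (moll ψ u s y)
    rw [abs_sub_comm (u w')] at h5
    linarith
  calc ∫ y in closedBall w s, |u y - moll ψ u s y|
      ≤ ∫ y in closedBall w s, (|u y - u w'| + D * 3 ^ (n + 1) * s * sharp u w') := by
        refine setIntegral_mono_on (intOn_cball (by fun_prop) w s)
          (intOn_cball (by fun_prop) w s) measurableSet_closedBall h1
    _ = (∫ y in closedBall w s, |u y - u w'|) +
          (ubv n * s ^ n) * (D * 3 ^ (n + 1) * s * sharp u w') := by
        rw [integral_add (intOn_cball (by fun_prop) w s) (intOn_cball (by fun_prop) w s),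
          setIntegral_const, volr_cball w hs, smul_eq_mul]
    _ ≤ (2 * s) ^ (n + 1) * sharp u w' + (ubv n * s ^ n) * (D * 3 ^ (n + 1) * s * sharp u w') := by
        gcongr
        exact osc_le_sharp hL (by positivity) (by linarith)
    _ = _ := by ring

lemma T1_bound {n : ℕ} {ψ u : Eu n → ℝ} (hψ : ContDiff ℝ (⊤ : ℕ∞) ψ)
    (hψsupp : tsupport ψ ⊆ ball 0 1) (hψint : ∫ x, ψ x = 1)
    (hu : ContDiff ℝ (⊤ : ℕ∞) u) (hc : HasCompactSupport u) {L : ℝ≥0} (hL : LipschitzWith L u)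
    {D : ℝ} (hD0 : 0 < D) (hD : ∀ y, |ψ y| ≤ D) {σ : ℝ} (hσ0 : 0 < σ) (hσ1 : σ ≤ 1)
    {x : Eu n} {J : ℝ} (hJ0 : 0 ≤ J)
    (hJ : ∀ R : ℝ, 0 < R → ∫⁻ y in closedBall x R, ENNReal.ofReal (sharp u y ^ σ) ≤
      ENNReal.ofReal (R ^ n * J)) {ε t : ℝ} (hε : 0 < ε) (hε1 : ε ≤ 1) (ht : 0 < t) :
    ∫ y in closedBall x t, |u y - moll ψ u (ε * t) y| ≤
      t ^ (n + 1) * ((2 ^ (n + 1) + ubv n * D * 3 ^ (n + 1)) * 2 ^ n / ubv n *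
        (3 ^ n / ubv n) ^ ((1 - σ) / σ) * ε ^ (1 + n - n / σ) * J ^ (1 / σ)) := by
  set s := ε * t with hsdef
  have hs : 0 < s := by positivity
  have hst : s ≤ t := by rw [hsdef]; nlinarith
  have hb := ubv_pos n
  set C1 := 2 ^ (n + 1) + ubv n * D * 3 ^ (n + 1) with hC1
  have hC1p : 0 < C1 := by positivity
  set κ := C1 * s ^ (n + 1) with hκ
  have hκp : 0 < κ := by positivity
  have hcm := continuous_moll hψ hu hc s
  have hcu := hu.continuous
  set Q : Eu n → ℝ := fun w => ∫ y in closedBall w s, |u y - moll ψ u s y| with hQ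
  have hQ0 : ∀ w, 0 ≤ Q w := fun w => integral_nonneg fun _ => abs_nonneg _
  have hQloc : ∀ w w', dist w w' ≤ s → Q w ≤ κ * sharp u w' := fun w w' h =>
    T1_local hψ hψsupp hψint hu hc hL hD0 hD hs h
  set Λ := ((3 ^ n / ubv n) * (ε ^ n)⁻¹ * J) ^ (1 / σ) with hΛ
  have hΛ0 : 0 ≤ Λ := by positivity
  have hQΛ : ∀ w ∈ closedBall x (2 * t), Q w ≤ κ * Λ := by
    intro w hw
    have h1 : ENNReal.ofReal ((Q w / κ) ^ σ * (ubv n * s ^ n)) ≤ ENNReal.ofReal ((3 * t) ^ n * J) := by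
      calc ENNReal.ofReal ((Q w / κ) ^ σ * (ubv n * s ^ n))
          = ∫⁻ y in closedBall w s, ENNReal.ofReal ((Q w / κ) ^ σ) := by
            rw [setLIntegral_const, vol_cball w hs, ENNReal.ofReal_mul]
            have := hQ0 w
            positivity
        _ ≤ ∫⁻ y in closedBall w s, ENNReal.ofReal (sharp u y ^ σ) := by
            refine setLIntegral_mono' measurableSet_closedBall fun y hy => ?_
            refine ENNReal.ofReal_le_ofReal (Real.rpow_le_rpow (div_nonneg (hQ0 w) hκp.le) ?_ hσ0.le)
            rw [div_le_iff₀ hκp, mul_comm]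
            exact hQloc w y (by rw [dist_comm]; exact hy)
        _ ≤ ∫⁻ y in closedBall x (3 * t), ENNReal.ofReal (sharp u y ^ σ) := by
            refine lintegral_mono_set (closedBall_subset_closedBall' ?_)
            rw [mem_closedBall] at hw
            linarith
        _ ≤ _ := hJ _ (by positivity)
    rw [ENNReal.ofReal_le_ofReal_iff (by positivity)] at h1
    have h2 : (Q w / κ) ^ σ ≤ (3 ^ n / ubv n) * (ε ^ n)⁻¹ * J := by
      rw [← le_div_iff₀ (by positivity)] at h1
      refine h1.trans (le_of_eq ?_)
      rw [hsdef]
      field_simp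
      ring
    have h3 : Q w / κ ≤ Λ := by
      rw [hΛ, one_div, Real.le_rpow_inv_iff_of_pos (div_nonneg (hQ0 w) hκp.le) (by positivity) hσ0]
      exact h2
    rw [div_le_iff₀ hκp] at h3
    linarith
  have hQmix : ∀ w ∈ closedBall x (2 * t), Q w ≤ κ * Λ ^ (1 - σ) * sharp u w ^ σ := by
    intro w hw
    have h1 := hQΛ w hw
    have h2 := hQloc w w (by rw [dist_self]; exact hs.le)
    have hS := sharp_nonneg u w
    calc Q w = Q w ^ σ * Q w ^ (1 - σ) := by
          rcases (hQ0 w).eq_or_lt with h | h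
          · rw [← h, Real.zero_rpow hσ0.ne', zero_mul]
          · rw [← Real.rpow_add h]; simp
      _ ≤ (κ * sharp u w) ^ σ * (κ * Λ) ^ (1 - σ) := by
          have := hQ0 w
          gcongr
      _ = (κ ^ σ * κ ^ (1 - σ)) * Λ ^ (1 - σ) * sharp u w ^ σ := by
          rw [Real.mul_rpow hκp.le hS, Real.mul_rpow hκp.le hΛ0]; ring
      _ = _ := by
          rw [← Real.rpow_add hκp]; simp
  set H : Eu n → ℝ≥0∞ := fun y => ENNReal.ofReal |u y - moll ψ u s y| with hH
  have hHint : ∀ (w : Eu n) (r : ℝ), ∫⁻ y in closedBall w r, H y =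
      ENNReal.ofReal (∫ y in closedBall w r, |u y - moll ψ u s y|) := fun w r =>
    (ofReal_integral_eq_lintegral_ofReal (intOn_cball (by fun_prop) w r)
      (Filter.Eventually.of_forall fun _ => abs_nonneg _)).symm
  have hfin : ENNReal.ofReal (ubv n * s ^ n) *
      ENNReal.ofReal (∫ y in closedBall x t, |u y - moll ψ u s y|) ≤
      ENNReal.ofReal (κ * Λ ^ (1 - σ) * ((2 * t) ^ n * J)) := by
    rw [← hHint]
    refine (fubini_ball (by fun_prop) x hs hst).trans ?_
    calc ∫⁻ w in closedBall x (2 * t), ∫⁻ y in closedBall w s, H y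
        ≤ ∫⁻ w in closedBall x (2 * t), ENNReal.ofReal (κ * Λ ^ (1 - σ)) *
            ENNReal.ofReal (sharp u w ^ σ) := by
          refine setLIntegral_mono' measurableSet_closedBall fun w hw => ?_
          rw [hHint, ← ENNReal.ofReal_mul (by positivity)]
          exact ENNReal.ofReal_le_ofReal (hQmix w hw)
      _ = ENNReal.ofReal (κ * Λ ^ (1 - σ)) * ∫⁻ w in closedBall x (2 * t),
            ENNReal.ofReal (sharp u w ^ σ) := lintegral_const_mul' _ _ ENNReal.ofReal_ne_top
      _ ≤ ENNReal.ofReal (κ * Λ ^ (1 - σ)) * ENNReal.ofReal ((2 * t) ^ n * J) := by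
          gcongr
          exact hJ _ (by positivity)
      _ = _ := by rw [← ENNReal.ofReal_mul (by positivity)]
  rw [← ENNReal.ofReal_mul (by positivity), ENNReal.ofReal_le_ofReal_iff (by positivity)] at hfin
  have hfin2 : ∫ y in closedBall x t, |u y - moll ψ u s y| ≤
      κ * Λ ^ (1 - σ) * ((2 * t) ^ n * J) / (ubv n * s ^ n) := by
    rw [le_div_iff₀ (by positivity)]; linarith
  refine hfin2.trans (le_of_eq ?_)
  have hΛe : Λ ^ (1 - σ) * J = (3 ^ n / ubv n) ^ ((1 - σ) / σ) * ε ^ ((n : ℝ) - n / σ) *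
      J ^ (1 / σ) := by
    have hJe : J ^ (1 / σ) = J ^ ((1 - σ) / σ) * J := by
      rcases hJ0.eq_or_lt with h | h
      · rw [← h, Real.zero_rpow (by positivity), mul_zero]
      · rw [← Real.rpow_add_one h.ne']
        congr 1
        field_simp
        ring
    have hεe : ε ^ ((n : ℝ) - n / σ) = ((ε ^ n)⁻¹) ^ ((1 - σ) / σ) := by
      rw [← Real.rpow_natCast, ← Real.rpow_neg hε.le, ← Real.rpow_mul hε.le]
      congr 1
      field_simp
      ring
    rw [hJe, hεe, hΛ, ← Real.rpow_mul (by positivity), Real.mul_rpow (by positivity) hJ0,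
      Real.mul_rpow (by positivity) (by positivity)]
    have : 1 / σ * (1 - σ) = (1 - σ) / σ := by ring
    rw [this]
    ring
  have hεs : ε ^ (1 + (n : ℝ) - n / σ) = ε * ε ^ ((n : ℝ) - n / σ) := by
    have e : 1 + (n:ℝ) - n / σ = 1 + ((n:ℝ) - n / σ) := by ring
    rw [e, Real.rpow_add hε, Real.rpow_one]
  calc κ * Λ ^ (1 - σ) * ((2 * t) ^ n * J) / (ubv n * s ^ n)
      = κ * (2 * t) ^ n / (ubv n * s ^ n) * (Λ ^ (1 - σ) * J) := by ring
    _ = _ := by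
      rw [hΛe, hεs, hκ, hsdef]
      field_simp
      try ring


lemma ker_bound {n : ℕ} {ψ u : Eu n → ℝ} (hψ : ContDiff ℝ (⊤ : ℕ∞) ψ)
    (hψsupp : tsupport ψ ⊆ ball 0 1)
    (hu : ContDiff ℝ (⊤ : ℕ∞) u) {L : ℝ≥0} (hL : LipschitzWith L u)
    {D : ℝ} (hD0 : 0 < D)
    (hD : ∀ j y z, |pderivIdx n j ψ y - pderivIdx n j ψ z| ≤ D * dist y z)
    {σ : ℝ} (hσ0 : 0 < σ) {G : Eu n → ℝ} (hG : ∀ s : ℝ, 0 < s → ∀ z, ∑ j, |kerF ψ u j s z| ≤ G z)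
    {x : Eu n} {K : ℝ} (hK0 : 0 ≤ K)
    (hK : ∀ R : ℝ, 0 < R → ∫⁻ y in closedBall x R, ENNReal.ofReal (G y ^ σ) ≤
      ENNReal.ofReal (R ^ n * K)) {ε ρ t : ℝ} (hε : 0 < ε) (hε1 : ε ≤ 1) (ht : 0 < t)
    (hρ : 0 < ρ) (hρ1 : ρ ≤ 1) (hρε : n * D * 3 ^ (n + 1) * ρ ≤ ε ^ (n + 3))
    {z : Eu n} (hz : z ∈ closedBall x t) :
    ∑ j, |kerF ψ u j (ε * t) z| ≤
      ε * sharp u x + (2 ^ n / (ubv n * ρ ^ n) * K) ^ (1 / σ) := by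
  have hb := ubv_pos n
  have hS := sharp_nonneg u x
  set s := ε * t with hsdef
  have hs : 0 < s := by positivity
  have hst : s ≤ t := by rw [hsdef]; nlinarith
  rw [mem_closedBall] at hz
  have h1 : ∀ z' ∈ closedBall z (ρ * t), ∑ j, |kerF ψ u j s z| ≤ ε * sharp u x + G z' := by
    intro z' hz'
    rw [mem_closedBall] at hz'
    have hρt : ρ * t ≤ t := by nlinarith
    have h2 : ∀ j, |kerF ψ u j s z| ≤ |kerF ψ u j s z'| +
        ((s⁻¹) ^ (n + 2) * D * (ρ * t)) * ((3 * t) ^ (n + 1) * sharp u x) := by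
      intro j
      have h3 := kerF_lip hψ hψsupp hu hD j hs (z := z) (z' := z') (x := x) (R := 3 * t)
        (by linarith) (by have := dist_triangle z' z x; linarith) (u x)
      have h4 : ∫ y in closedBall x (3 * t), |u y - u x| ≤ (3 * t) ^ (n + 1) * sharp u x :=
        oscI_le_sharp hL x (by positivity)
      have h5 : |kerF ψ u j s z - kerF ψ u j s z'| ≤
          ((s⁻¹) ^ (n + 2) * D * (ρ * t)) * ((3 * t) ^ (n + 1) * sharp u x) := by
        refine h3.trans ?_
        rw [dist_comm] at hz'
        gcongr
      have h6 := abs_sub_abs_le_abs_sub (kerF ψ u j s z) (kerF ψ u j s z')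
      linarith
    have h7 : ∑ j, |kerF ψ u j s z| ≤ ∑ j, (|kerF ψ u j s z'| +
        ((s⁻¹) ^ (n + 2) * D * (ρ * t)) * ((3 * t) ^ (n + 1) * sharp u x)) :=
      Finset.sum_le_sum fun j _ => h2 j
    rw [Finset.sum_add_distrib, Finset.sum_const, Finset.card_univ, Fintype.card_fin,
      nsmul_eq_mul] at h7
    have h8 : (n : ℝ) * (((s⁻¹) ^ (n + 2) * D * (ρ * t)) * ((3 * t) ^ (n + 1) * sharp u x)) ≤
        ε * sharp u x := by
      calc _ = (n * D * 3 ^ (n + 1) * ρ) * (ε ^ (n + 2))⁻¹ * sharp u x := by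
            rw [inv_pow, hsdef, mul_pow, mul_pow]
            field_simp
            ring
        _ ≤ ε ^ (n + 3) * (ε ^ (n + 2))⁻¹ * sharp u x := by gcongr
        _ = _ := by
            rw [pow_succ ε (n + 2)]
            field_simp
    have := hG s hs z'
    linarith
  set A := max (∑ j, |kerF ψ u j s z| - ε * sharp u x) 0 with hA
  have hA0 : 0 ≤ A := le_max_right _ _
  have hAG : ∀ z' ∈ closedBall z (ρ * t), A ≤ G z' := by
    intro z' hz'
    refine max_le ?_ ?_
    · have := h1 z' hz'
      linarith
    · exact le_trans (Finset.sum_nonneg fun j _ => abs_nonneg _) (hG s hs z')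
  have h9 : ENNReal.ofReal (A ^ σ * (ubv n * (ρ * t) ^ n)) ≤ ENNReal.ofReal ((2 * t) ^ n * K) := by
    calc ENNReal.ofReal (A ^ σ * (ubv n * (ρ * t) ^ n))
        = ∫⁻ y in closedBall z (ρ * t), ENNReal.ofReal (A ^ σ) := by
          rw [setLIntegral_const, vol_cball z (by positivity), ENNReal.ofReal_mul (by positivity)]
      _ ≤ ∫⁻ y in closedBall z (ρ * t), ENNReal.ofReal (G y ^ σ) := by
          refine setLIntegral_mono' measurableSet_closedBall fun y hy => ?_
          exact ENNReal.ofReal_le_ofReal (Real.rpow_le_rpow hA0 (hAG y hy) hσ0.le)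
      _ ≤ ∫⁻ y in closedBall x (2 * t), ENNReal.ofReal (G y ^ σ) := by
          refine lintegral_mono_set (closedBall_subset_closedBall' ?_)
          nlinarith
      _ ≤ _ := hK _ (by positivity)
  rw [ENNReal.ofReal_le_ofReal_iff (by positivity)] at h9
  have h10 : A ^ σ ≤ 2 ^ n / (ubv n * ρ ^ n) * K := by
    rw [← le_div_iff₀ (by positivity)] at h9
    refine h9.trans (le_of_eq ?_)
    rw [mul_pow, mul_pow]
    field_simp
  have h11 : A ≤ (2 ^ n / (ubv n * ρ ^ n) * K) ^ (1 / σ) := by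
    rw [one_div, Real.le_rpow_inv_iff_of_pos hA0 (by positivity) hσ0]
    exact h10
  have := le_max_left (∑ j, |kerF ψ u j s z| - ε * sharp u x) 0
  linarith

lemma pointwise_bound {n : ℕ} {ψ u : Eu n → ℝ} (hψ : ContDiff ℝ (⊤ : ℕ∞) ψ)
    (hψsupp : tsupport ψ ⊆ ball 0 1) (hψint : ∫ x, ψ x = 1)
    (hu : ContDiff ℝ (⊤ : ℕ∞) u) (hc : HasCompactSupport u) {L : ℝ≥0} (hL : LipschitzWith L u)
    {D : ℝ} (hD0 : 0 < D) (hD1 : ∀ y, |ψ y| ≤ D)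
    (hD : ∀ j y z, |pderivIdx n j ψ y - pderivIdx n j ψ z| ≤ D * dist y z)
    {σ : ℝ} (hσ0 : 0 < σ) (hσ1 : σ ≤ 1)
    {G : Eu n → ℝ} (hG : ∀ s : ℝ, 0 < s → ∀ z, ∑ j, |kerF ψ u j s z| ≤ G z)
    {x : Eu n} {J : ℝ} (hJ0 : 0 ≤ J)
    (hJ : ∀ R : ℝ, 0 < R → ∫⁻ y in closedBall x R, ENNReal.ofReal (sharp u y ^ σ) ≤
      ENNReal.ofReal (R ^ n * J)) {K : ℝ} (hK0 : 0 ≤ K)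
    (hK : ∀ R : ℝ, 0 < R → ∫⁻ y in closedBall x R, ENNReal.ofReal (G y ^ σ) ≤
      ENNReal.ofReal (R ^ n * K)) {ε ρ : ℝ} (hε : 0 < ε) (hε1 : ε ≤ 1)
    (hρ : 0 < ρ) (hρ1 : ρ ≤ 1) (hρε : n * D * 3 ^ (n + 1) * ρ ≤ ε ^ (n + 3)) :
    sharp u x ≤ (2 ^ (n + 1) + ubv n * D * 3 ^ (n + 1)) * 2 ^ n / ubv n *
        (3 ^ n / ubv n) ^ ((1 - σ) / σ) * ε ^ (1 + n - n / σ) * J ^ (1 / σ)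
      + (ubv n + ubv n * D) * ε * sharp u x
      + ubv n * (2 ^ n / (ubv n * ρ ^ n) * K) ^ (1 / σ) := by
  have hb := ubv_pos n
  have hS := sharp_nonneg u x
  refine sharp_le fun t ht => ?_
  set s := ε * t with hsdef
  have hs : 0 < s := by positivity
  have hst : s ≤ t := by rw [hsdef]; nlinarith
  have hcm := continuous_moll hψ hu hc s
  have hcu := hu.continuous
  have hT1 := T1_bound hψ hψsupp hψint hu hc hL hD0 hD1 hσ0 hσ1 hJ0 hJ hε hε1 ht
  rw [← hsdef] at hT1
  set B := ε * sharp u x + (2 ^ n / (ubv n * ρ ^ n) * K) ^ (1 / σ) with hB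
  have hT2 : ∀ y ∈ closedBall x t, |moll ψ u s y - moll ψ u s x| ≤ B * t := fun y hy =>
    moll_diff_le hψ hu hc s ht (fun z hz =>
      ker_bound hψ hψsupp hu hL hD0 hD hσ0 hG hK0 hK hε hε1 ht hρ hρ1 hρε hz) hy
  have hT3 : |moll ψ u s x - u x| ≤ D * s * sharp u x := by
    refine (moll_sub_le hψ hψsupp hψint hcu hD1 hs x (u x)).trans ?_
    calc _ ≤ (s⁻¹) ^ n * D * (s ^ (n + 1) * sharp u x) := by
          gcongr
          exact oscI_le_sharp hL x hs
      _ = _ := by rw [inv_pow]; field_simp; ring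
  calc oscI u x t ≤ ∫ y in closedBall x t, (|u y - moll ψ u s y| + (B * t + D * s * sharp u x)) := by
        refine setIntegral_mono_on (intOn_cball (by fun_prop) x t)
          (intOn_cball (by fun_prop) x t) measurableSet_closedBall fun y hy => ?_
        have h1 := abs_sub_le (u y) (moll ψ u s y) (u x)
        have h2 := abs_sub_le (moll ψ u s y) (moll ψ u s x) (u x)
        have h3 := hT2 y hy
        linarith
    _ = (∫ y in closedBall x t, |u y - moll ψ u s y|) +
          (ubv n * t ^ n) * (B * t + D * s * sharp u x) := by
        rw [integral_add (intOn_cball (by fun_prop) x t) (intOn_cball (by fun_prop) x t),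
          setIntegral_const, volr_cball x ht, smul_eq_mul]
    _ ≤ _ := by
        refine (add_le_add_left hT1 _).trans (le_of_eq ?_)
        rw [hB, hsdef]
        ring


lemma exists_lip {n : ℕ} {u : Eu n → ℝ} (hu : ContDiff ℝ (⊤ : ℕ∞) u) (hc : HasCompactSupport u) :
    ∃ L : ℝ≥0, LipschitzWith L u :=
  ContDiff.lipschitzWith_of_hasCompactSupport hc hu (by simp)

lemma hlMax_lt_top {n : ℕ} {g : Eu n → ℝ} {B : ℝ} (hB0 : 0 ≤ B) (hB : ∀ x, g x ≤ B) (x : Eu n) :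
    hlMax (fun y => ENNReal.ofReal (g y)) x < ⊤ := by
  refine lt_of_le_of_lt (b := ENNReal.ofReal (B * ubv n)) ?_ ENNReal.ofReal_lt_top
  refine iSup_le fun ⟨R, hR⟩ => ?_
  have hb := ubv_pos n
  calc ENNReal.ofReal ((R⁻¹) ^ n) * ∫⁻ y in closedBall x R, ENNReal.ofReal (g y)
      ≤ ENNReal.ofReal ((R⁻¹) ^ n) * ∫⁻ y in closedBall x R, ENNReal.ofReal B := by
        gcongr
        exact hB _
    _ = _ := by
        rw [setLIntegral_const, vol_cball x hR, ← ENNReal.ofReal_mul hB0,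
          ← ENNReal.ofReal_mul (by positivity)]
        congr 1
        rw [inv_pow]
        field_simp

lemma ball_le_toReal {n : ℕ} {g : Eu n → ℝ} {B : ℝ} (hB0 : 0 ≤ B) (hB : ∀ x, g x ≤ B) (x : Eu n)
    {R : ℝ} (hR : 0 < R) : ∫⁻ y in closedBall x R, ENNReal.ofReal (g y) ≤
      ENNReal.ofReal (R ^ n * (hlMax (fun y => ENNReal.ofReal (g y)) x).toReal) := by
  rw [ENNReal.ofReal_mul (by positivity), ENNReal.ofReal_toReal (hlMax_lt_top hB0 hB x).ne]
  exact lintegral_cball_le_hlMax _ x hR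

lemma sum_rpow_le' {ι : Type*} (s : Finset ι) (f : ι → ℝ≥0∞) {p : ℝ} (hp0 : 0 < p) (hp1 : p ≤ 1) :
    (∑ i ∈ s, f i) ^ p ≤ ∑ i ∈ s, f i ^ p := by
  classical
  induction s using Finset.induction_on with
  | empty => simp [hp0]
  | insert a s ha ih =>
    rw [Finset.sum_insert ha, Finset.sum_insert ha]
    exact (ENNReal.rpow_add_le_add_rpow _ _ hp0.le hp1).trans (by gcongr)

lemma ofReal_rpow_rpow_div {a σ p : ℝ} (ha : 0 ≤ a) (hσ : 0 < σ) :
    ENNReal.ofReal (a ^ σ) ^ (p / σ) = ENNReal.ofReal a ^ p := by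
  rw [← ENNReal.ofReal_rpow_of_nonneg ha hσ.le, ← ENNReal.rpow_mul]
  congr 1
  field_simp

lemma exists_small {δ p A Q E : ℝ} (hδ : 0 < δ) (hp : 0 < p) (hA : 0 < A) (hQ : 0 < Q)
    (hE : 0 < E) : ∃ ε : ℝ, 0 < ε ∧ ε ≤ 1 ∧ E * ε ≤ 1 / 2 ∧ (A * ε ^ δ) ^ p * Q ≤ 1 / 2 := by
  set η := (1 / (2 * Q)) ^ (1 / p) / A with hη
  have hη0 : 0 < η := by positivity
  refine ⟨min (min 1 (1 / (2 * E))) (η ^ (1 / δ)), by positivity, ?_, ?_, ?_⟩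
  · exact (min_le_left _ _).trans (min_le_left _ _)
  · calc E * min (min 1 (1 / (2 * E))) (η ^ (1 / δ)) ≤ E * (1 / (2 * E)) := by
          gcongr
          exact (min_le_left _ _).trans (min_le_right _ _)
      _ = 1 / 2 := by field_simp
  · calc (A * (min (min 1 (1 / (2 * E))) (η ^ (1 / δ))) ^ δ) ^ p * Q
        ≤ (A * (η ^ (1 / δ)) ^ δ) ^ p * Q := by
          gcongr
          exact min_le_right _ _
      _ = (A * η) ^ p * Q := by
          rw [← Real.rpow_mul hη0.le, one_div, inv_mul_cancel₀ hδ.ne', Real.rpow_one]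
      _ = 1 / (2 * Q) * Q := by
          rw [hη, mul_div_cancel₀ _ hA.ne', ← Real.rpow_mul (by positivity), one_div p,
            inv_mul_cancel₀ hp.ne', Real.rpow_one]
      _ ≤ 1 / 2 := le_of_eq (by field_simp)

theorem sharp_le_hardy {n : ℕ} (hn : 1 ≤ n) {p : ℝ} (hp : (n : ℝ) / (n + 1) < p) (hp1 : p ≤ 1)
    {ψ : Eu n → ℝ} (hψ : ContDiff ℝ (⊤ : ℕ∞) ψ)
    (hψsupp : tsupport ψ ⊆ ball 0 1) (hψint : ∫ x, ψ x = 1) :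
    ∃ C : ℝ≥0∞, C ≠ ⊤ ∧ ∀ u : Eu n → ℝ, ContDiff ℝ (⊤ : ℕ∞) u → HasCompactSupport u →
      ∫⁻ x, ENNReal.ofReal (sharp u x) ^ p ≤ C * ∑ j : Fin n, ∫⁻ x, convMax n ψ u j x ^ p := by
  obtain ⟨σ, hσn, hσp⟩ := exists_between hp
  have hσ0 : 0 < σ := lt_of_le_of_lt (by positivity) hσn
  have hp0 : 0 < p := hσ0.trans hσp
  have hσ1 : σ ≤ 1 := (hσp.trans_le hp1).le
  have hb := ubv_pos n
  obtain ⟨D, hD0, hD1, hD2, hD3⟩ := exists_ker_consts hψ hψsupp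
  obtain ⟨Q, hQ0, hQ⟩ := hl_strong hn (s := p / σ) ((one_lt_div hσ0).2 hσp)
  set Ca := (2 ^ (n + 1) + ubv n * D * 3 ^ (n + 1)) * 2 ^ n / ubv n *
        (3 ^ n / ubv n) ^ ((1 - σ) / σ) with hCa
  have hCa0 : 0 < Ca := by positivity
  have hδ : 0 < 1 + (n : ℝ) - n / σ := by
    rw [div_lt_iff₀ (by positivity)] at hσn
    rw [sub_pos, div_lt_iff₀ hσ0]
    linarith
  obtain ⟨ε, hε, hε1, hεE, hεQ⟩ := exists_small hδ hp0 (A := 2 * Ca) (by positivity) hQ0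
    (E := ubv n + ubv n * D) (by positivity)
  set ρ := ε ^ (n + 3) / (n * D * 3 ^ (n + 1) + 1) with hρ
  have hρ0 : 0 < ρ := by positivity
  have hρ1 : ρ ≤ 1 := by
    rw [hρ, div_le_one (by positivity)]
    have : ε ^ (n + 3) ≤ 1 := pow_le_one₀ hε.le hε1
    have : 0 ≤ n * D * 3 ^ (n + 1) := by positivity
    linarith
  have hρε : n * D * 3 ^ (n + 1) * ρ ≤ ε ^ (n + 3) := by
    rw [hρ, ← mul_div_assoc, div_le_iff₀ (by positivity)]
    have : 0 < ε ^ (n + 3) := by positivity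
    nlinarith
  set c1 := 2 * Ca * ε ^ (1 + (n : ℝ) - n / σ) with hc1
  set c2 := 2 * (ubv n * (2 ^ n / (ubv n * ρ ^ n)) ^ (1 / σ)) with hc2
  have hc10 : 0 ≤ c1 := by positivity
  have hc20 : 0 ≤ c2 := by positivity
  refine ⟨2 * (ENNReal.ofReal c2 ^ p * ENNReal.ofReal Q), by finiteness, fun u hu hc => ?_⟩
  obtain ⟨L, hL⟩ := exists_lip hu hc
  have hS0 := sharp_nonneg u
  set G : Eu n → ℝ := fun z => ∑ j, (convMax n ψ u j z).toReal with hGdef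
  have hcm : ∀ j z, convMax n ψ u j z ≠ ⊤ := fun j z =>
    ((convMax_le hψ hψsupp hu hL hD0.le hD2 j z).trans_lt ENNReal.ofReal_lt_top).ne
  have hG0 : ∀ z, 0 ≤ G z := fun z => Finset.sum_nonneg fun j _ => ENNReal.toReal_nonneg
  have hG : ∀ s : ℝ, 0 < s → ∀ z, ∑ j, |kerF ψ u j s z| ≤ G z := by
    intro s hs z
    refine Finset.sum_le_sum fun j _ => ?_
    rw [← ENNReal.ofReal_le_iff_le_toReal (hcm j z)]
    exact kerF_le_convMax ψ u j hs z
  have hGB : ∀ z, G z ≤ n * (D * (L * ubv n)) := by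
    intro z
    calc G z ≤ ∑ j : Fin n, D * (L * ubv n) := by
          refine Finset.sum_le_sum fun j _ => ?_
          refine ENNReal.toReal_le_of_le_ofReal (by positivity) ?_
          refine (convMax_le hψ hψsupp hu hL hD0.le hD2 j z).trans (ENNReal.ofReal_le_ofReal ?_)
          gcongr
          exact sharp_le_lip hL z
      _ = _ := by simp
  have hGm : Measurable G :=
    Finset.measurable_sum _ fun j _ => (measurable_convMax hψ hψsupp hu hc j).ennreal_toReal
  have hSm := measurable_sharp hL
  set f1 : Eu n → ℝ := fun y => sharp u y ^ σ with hf1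
  set f2 : Eu n → ℝ := fun y => G y ^ σ with hf2
  have hf1B : ∀ y, f1 y ≤ (L * ubv n) ^ σ := fun y =>
    Real.rpow_le_rpow (hS0 y) (sharp_le_lip hL y) hσ0.le
  have hf2B : ∀ y, f2 y ≤ (n * (D * (L * ubv n))) ^ σ := fun y =>
    Real.rpow_le_rpow (hG0 y) (hGB y) hσ0.le
  have hf10 : ∀ y, 0 ≤ f1 y := fun y => Real.rpow_nonneg (hS0 y) _
  have hf20 : ∀ y, 0 ≤ f2 y := fun y => Real.rpow_nonneg (hG0 y) _
  set M1 := hlMax fun y => ENNReal.ofReal (f1 y) with hM1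
  set M2 := hlMax fun y => ENNReal.ofReal (f2 y) with hM2
  have hpt : ∀ x, ENNReal.ofReal (sharp u x) ≤
      ENNReal.ofReal c1 * M1 x ^ (1 / σ) + ENNReal.ofReal c2 * M2 x ^ (1 / σ) := by
    intro x
    have h1t := hlMax_lt_top (by positivity) hf1B x
    have h2t := hlMax_lt_top (by positivity) hf2B x
    have h := pointwise_bound hψ hψsupp hψint hu hc hL hD0 hD1 hD3 hσ0 hσ1 hG
      (x := x) (J := (M1 x).toReal) ENNReal.toReal_nonneg
      (fun R hR => ball_le_toReal (by positivity) hf1B x hR)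
      (K := (M2 x).toReal) ENNReal.toReal_nonneg
      (fun R hR => ball_le_toReal (by positivity) hf2B x hR) hε hε1 hρ0 hρ1 hρε
    have h3 : (ubv n + ubv n * D) * ε * sharp u x ≤ 1 / 2 * sharp u x := by
      gcongr
      exact hS0 x
    rw [Real.mul_rpow (by positivity) ENNReal.toReal_nonneg, ← hCa] at h
    have h4 : sharp u x ≤ c1 * (M1 x).toReal ^ (1 / σ) + c2 * (M2 x).toReal ^ (1 / σ) := by
      rw [hc1, hc2]
      linarith
    refine (ENNReal.ofReal_le_ofReal h4).trans (le_of_eq ?_)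
    rw [ENNReal.ofReal_add (by positivity) (by positivity), ENNReal.ofReal_mul hc10,
      ENNReal.ofReal_mul hc20,
      ← ENNReal.ofReal_rpow_of_nonneg ENNReal.toReal_nonneg (by positivity),
      ← ENNReal.ofReal_rpow_of_nonneg ENNReal.toReal_nonneg (by positivity),
      ENNReal.ofReal_toReal h1t.ne, ENNReal.ofReal_toReal h2t.ne]
  have hM1m : Measurable M1 := measurable_hlMax _
  have hM2m : Measurable M2 := measurable_hlMax _
  have hptp : ∀ x, ENNReal.ofReal (sharp u x) ^ p ≤
      ENNReal.ofReal c1 ^ p * M1 x ^ (p / σ) + ENNReal.ofReal c2 ^ p * M2 x ^ (p / σ) := by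
    intro x
    refine (ENNReal.rpow_le_rpow (hpt x) hp0.le).trans ?_
    refine (ENNReal.rpow_add_le_add_rpow _ _ hp0.le hp1).trans (le_of_eq ?_)
    rw [ENNReal.mul_rpow_of_nonneg _ _ hp0.le, ENNReal.mul_rpow_of_nonneg _ _ hp0.le,
      ← ENNReal.rpow_mul, ← ENNReal.rpow_mul, one_div_mul_eq_div]
  set I := ∫⁻ x, ENNReal.ofReal (sharp u x) ^ p with hI
  have hIt : I ≠ ⊤ := (lintegral_sharp_lt_top hL hc hp).ne
  set T := ∑ j : Fin n, ∫⁻ x, convMax n ψ u j x ^ p with hT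
  have hI1 : ∫⁻ x, M1 x ^ (p / σ) ≤ ENNReal.ofReal Q * I := by
    refine (hQ f1 (hSm.pow_const σ) hf10 ⟨_, hf1B⟩).trans (le_of_eq ?_)
    simp only [hf1, ofReal_rpow_rpow_div (hS0 _) hσ0]
    rfl
  have hI2 : ∫⁻ x, M2 x ^ (p / σ) ≤ ENNReal.ofReal Q * T := by
    refine (hQ f2 (hGm.pow_const σ) hf20 ⟨_, hf2B⟩).trans ?_
    simp only [hf2, ofReal_rpow_rpow_div (hG0 _) hσ0]
    gcongr
    rw [hT, ← lintegral_finsetSum _ fun j _ =>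
      (measurable_convMax hψ hψsupp hu hc j).pow_const p]
    refine lintegral_mono fun x => ?_
    have : ENNReal.ofReal (G x) = ∑ j, convMax n ψ u j x := by
      rw [hGdef, ENNReal.ofReal_sum_of_nonneg fun j _ => ENNReal.toReal_nonneg]
      exact Finset.sum_congr rfl fun j _ => ENNReal.ofReal_toReal (hcm j x)
    rw [this]
    exact sum_rpow_le' _ _ hp0 hp1
  have hc1h : ENNReal.ofReal c1 ^ p * ENNReal.ofReal Q ≤ ENNReal.ofReal (1 / 2) := by
    rw [ENNReal.ofReal_rpow_of_nonneg hc10 hp0.le, ← ENNReal.ofReal_mul (by positivity)]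
    exact ENNReal.ofReal_le_ofReal hεQ
  have hmain : I ≤ ENNReal.ofReal (1 / 2) * I + ENNReal.ofReal c2 ^ p * ENNReal.ofReal Q * T := by
    calc I ≤ ∫⁻ x, (ENNReal.ofReal c1 ^ p * M1 x ^ (p / σ) +
          ENNReal.ofReal c2 ^ p * M2 x ^ (p / σ)) := lintegral_mono hptp
      _ = ENNReal.ofReal c1 ^ p * (∫⁻ x, M1 x ^ (p / σ)) +
          ENNReal.ofReal c2 ^ p * ∫⁻ x, M2 x ^ (p / σ) := by
        rw [lintegral_add_left ((hM1m.pow_const _).const_mul _),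
          lintegral_const_mul _ (hM1m.pow_const _), lintegral_const_mul _ (hM2m.pow_const _)]
      _ ≤ ENNReal.ofReal c1 ^ p * (ENNReal.ofReal Q * I) +
          ENNReal.ofReal c2 ^ p * (ENNReal.ofReal Q * T) := by gcongr
      _ = (ENNReal.ofReal c1 ^ p * ENNReal.ofReal Q) * I +
          ENNReal.ofReal c2 ^ p * ENNReal.ofReal Q * T := by ring
      _ ≤ _ := by gcongr
  set Y := ENNReal.ofReal c2 ^ p * ENNReal.ofReal Q * T with hY
  have hhalf : ENNReal.ofReal (1 / 2) * I + ENNReal.ofReal (1 / 2) * I = I := by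
    rw [← add_mul, ← ENNReal.ofReal_add (by norm_num) (by norm_num)]
    norm_num
  have hle : ENNReal.ofReal (1 / 2) * I ≤ Y := by
    have hh : ENNReal.ofReal (1 / 2) * I + ENNReal.ofReal (1 / 2) * I ≤
        ENNReal.ofReal (1 / 2) * I + Y := by
      rw [hhalf]; exact hmain
    exact (ENNReal.add_le_add_iff_left (ENNReal.mul_ne_top ENNReal.ofReal_ne_top hIt)).1 hh
  calc I = ENNReal.ofReal (1 / 2) * I + ENNReal.ofReal (1 / 2) * I := hhalf.symm
    _ ≤ Y + Y := by gcongr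
    _ = 2 * (ENNReal.ofReal c2 ^ p * ENNReal.ofReal Q) * T := by rw [hY]; ring


lemma lintegral_scale {n : ℕ} {f : Eu n → ℝ≥0∞} (hf : Measurable f) (a : Eu n) {r : ℝ} (hr : 0 < r) :
    ∫⁻ x, f (r⁻¹ • (x - a)) = ENNReal.ofReal (r ^ n) * ∫⁻ x, f x := by
  rw [lintegral_sub_right_eq_self (fun x => f (r⁻¹ • x)) a]
  have h := lintegral_map (μ := (volume : Measure (Eu n))) hf (measurable_const_smul r⁻¹)
  rw [← h, Measure.map_addHaar_smul volume (inv_ne_zero hr.ne'), lintegral_smul_measure,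
    finrank_euclideanSpace_fin, inv_pow, inv_inv, abs_of_pos (by positivity), smul_eq_mul]

lemma exists_cutoff (n : ℕ) : ∃ (η : Eu n → ℝ) (L : ℝ≥0), ContDiff ℝ (⊤ : ℕ∞) η ∧
    (∀ x, 0 ≤ η x) ∧ (∀ x, η x ≤ 1) ∧ (∀ x ∈ closedBall (0 : Eu n) 1, η x = 1) ∧
    (∀ x ∉ ball (0 : Eu n) (3 / 2), η x = 0) ∧ LipschitzWith L η := by
  let f : ContDiffBump (0 : Eu n) := ⟨1, 3 / 2, one_pos, by norm_num⟩
  have hcd : ContDiff ℝ (⊤ : ℕ∞) (f : Eu n → ℝ) := f.contDiff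
  obtain ⟨L, hL⟩ := exists_lip hcd f.hasCompactSupport
  refine ⟨f, L, hcd, fun x => f.nonneg, fun x => f.le_one, fun x hx => f.one_of_mem_closedBall hx,
    fun x hx => f.zero_of_le_dist ?_, hL⟩
  rw [mem_ball, not_lt] at hx
  exact hx

lemma sharp_mul_le {n : ℕ} {u η : Eu n → ℝ} {L : ℝ≥0} (hL : LipschitzWith L u)
    (hη : Continuous η) (hη0 : ∀ x, 0 ≤ η x) (hη1 : ∀ x, η x ≤ 1) {Λ : ℝ} (hΛ : 0 ≤ Λ)
    (hηΛ : ∀ x y, |η x - η y| ≤ Λ * dist x y) {α : ℝ} (x : Eu n) :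
    sharp (fun y => η y * (1 - u y / α)) x ≤ |α|⁻¹ * sharp u x + |1 - u x / α| * Λ * ubv n := by
  have hcu := hL.continuous
  refine sharp_le fun t ht => ?_
  have h1 := oscI_le_sharp hL x ht
  calc oscI (fun y => η y * (1 - u y / α)) x t
      ≤ ∫ y in closedBall x t, (|α|⁻¹ * |u y - u x| + |1 - u x / α| * Λ * t) := by
        refine setIntegral_mono_on (intOn_cball (by fun_prop) x t)
          (intOn_cball (by fun_prop) x t) measurableSet_closedBall fun y hy => ?_
        have e : η y * (1 - u y / α) - η x * (1 - u x / α) =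
            η y * (α⁻¹ * (u x - u y)) + (1 - u x / α) * (η y - η x) := by
          rw [div_eq_mul_inv, div_eq_mul_inv]; ring
        rw [e]
        refine (abs_add_le _ _).trans ?_
        rw [abs_mul, abs_mul, abs_mul, abs_inv, abs_of_nonneg (hη0 y), abs_sub_comm (u x)]
        have h2 : η y * (|α|⁻¹ * |u y - u x|) ≤ 1 * (|α|⁻¹ * |u y - u x|) := by
          gcongr
          exact hη1 y
        have h3 : |1 - u x / α| * |η y - η x| ≤ |1 - u x / α| * (Λ * t) := by
          gcongr
          refine (hηΛ y x).trans ?_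
          gcongr
          exact hy
        linarith
    _ = |α|⁻¹ * oscI u x t + (ubv n * t ^ n) * (|1 - u x / α| * Λ * t) := by
        rw [integral_add (intOn_cball (by fun_prop) x t) (intOn_cball (by fun_prop) x t),
          setIntegral_const, volr_cball x ht, smul_eq_mul, integral_const_mul]
        rfl
    _ ≤ |α|⁻¹ * (t ^ (n + 1) * sharp u x) + (ubv n * t ^ n) * (|1 - u x / α| * Λ * t) := by
        gcongr
    _ = _ := by ring

/-- Pointwise bounds on the sharp function of the capacity test function. -/
lemma sharp_test {n : ℕ} {u η : Eu n → ℝ} {L : ℝ≥0} (hL : LipschitzWith L u)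
    (hη : Continuous η) (hη0 : ∀ x, 0 ≤ η x) (hη1 : ∀ x, η x ≤ 1) {L0 r : ℝ} (hL0 : 0 ≤ L0)
    (hr : 0 < r) (hηΛ : ∀ x y, |η x - η y| ≤ L0 / r * dist x y) {a x0 : Eu n}
    (hηs : ∀ y ∉ closedBall a (2 * r), η y = 0)
    (hx0 : dist x0 a ≤ r) (hα : u x0 ≠ 0) :
    (∀ x ∈ closedBall a (4 * r), sharp (fun y => η y * (1 - u y / u x0)) x ≤
      (1 + 5 * L0 * 2 ^ (n + 1)) * (|u x0|⁻¹ * (sharp u x + sharp u x0))) ∧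
    (∀ x ∉ closedBall a (4 * r), sharp (fun y => η y * (1 - u y / u x0)) x ≤
      8 ^ (n + 1) * (1 + ‖r⁻¹ • (x - a)‖)⁻¹ ^ (n + 1) * (|u x0|⁻¹ * sharp u x0)) := by
  have hb := ubv_pos n
  have hcu := hL.continuous
  have hα' : 0 < |u x0| := abs_pos.2 hα
  have hw : ∀ x, |1 - u x / u x0| = |u x0|⁻¹ * |u x - u x0| := by
    intro x
    rw [← abs_inv, ← abs_mul, abs_sub_comm]
    congr 1
    field_simp
  have hS0 := sharp_nonneg u x0
  constructor
  · intro x hx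
    rw [mem_closedBall] at hx
    refine (sharp_mul_le hL hη hη0 hη1 (by positivity) hηΛ x).trans ?_
    rw [hw]
    have h1 := hajlasz hL x x0
    have hS := sharp_nonneg u x
    have h2 : dist x x0 ≤ 5 * r := by
      have := dist_triangle_right x x0 a
      linarith
    have h3 : |u x - u x0| ≤ 2 ^ (n + 1) / ubv n * (5 * r) * (sharp u x + sharp u x0) := by
      refine h1.trans ?_
      gcongr
    have h4 : |u x0|⁻¹ * |u x - u x0| * (L0 / r) * ubv n ≤
        |u x0|⁻¹ * (2 ^ (n + 1) / ubv n * (5 * r) * (sharp u x + sharp u x0)) * (L0 / r) * ubv n := by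
      gcongr
    have h5 : |u x0|⁻¹ * (2 ^ (n + 1) / ubv n * (5 * r) * (sharp u x + sharp u x0)) * (L0 / r) * ubv n
        = 5 * L0 * 2 ^ (n + 1) * (|u x0|⁻¹ * (sharp u x + sharp u x0)) := by
      field_simp
    have h6 : |u x0|⁻¹ * sharp u x ≤ |u x0|⁻¹ * (sharp u x + sharp u x0) := by
      gcongr
      linarith
    linarith
  · intro x hx
    rw [mem_closedBall, not_le] at hx
    have hd : 0 < dist x a := by linarith
    refine (sharp_decay (by fun_prop) (a := a) (ρ := 2 * r) (by positivity)
      (fun y hy => by simp [hηs y hy]) (by linarith)).trans ?_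
    have h1 : ∫ y in closedBall a (2 * r), |η y * (1 - u y / u x0)| ≤
        |u x0|⁻¹ * ((3 * r) ^ (n + 1) * sharp u x0) := by
      have h2 : ∫ y in closedBall a (2 * r), |u y - u x0| ≤ (3 * r) ^ (n + 1) * sharp u x0 :=
        osc_le_sharp hL (by positivity) (by rw [dist_comm]; linarith)
      calc ∫ y in closedBall a (2 * r), |η y * (1 - u y / u x0)|
          ≤ ∫ y in closedBall a (2 * r), |u x0|⁻¹ * |u y - u x0| := by
            refine setIntegral_mono_on (intOn_cball (by fun_prop) _ _)
              (intOn_cball (by fun_prop) _ _) measurableSet_closedBall fun y hy => ?_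
            rw [abs_mul, hw, abs_of_nonneg (hη0 y)]
            exact mul_le_of_le_one_left (by positivity) (hη1 y)
        _ = |u x0|⁻¹ * ∫ y in closedBall a (2 * r), |u y - u x0| := integral_const_mul _ _
        _ ≤ _ := by gcongr
    have h3 : ‖r⁻¹ • (x - a)‖ = dist x a / r := by
      rw [norm_smul, norm_inv, Real.norm_eq_abs, abs_of_pos hr, ← dist_eq_norm, div_eq_inv_mul]
    calc (2 / dist x a) ^ (n + 1) * ∫ y in closedBall a (2 * r), |η y * (1 - u y / u x0)|
        ≤ (2 / dist x a) ^ (n + 1) * (|u x0|⁻¹ * ((3 * r) ^ (n + 1) * sharp u x0)) := by gcongr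
      _ = (6 * r / dist x a) ^ (n + 1) * (|u x0|⁻¹ * sharp u x0) := by
          have : 6 * r / dist x a = (2 / dist x a) * (3 * r) := by ring
          rw [this, mul_pow (2 / dist x a)]; ring
      _ ≤ (8 * (1 + ‖r⁻¹ • (x - a)‖)⁻¹) ^ (n + 1) * (|u x0|⁻¹ * sharp u x0) := by
          have h4 : 6 * r / dist x a ≤ 8 * (1 + ‖r⁻¹ • (x - a)‖)⁻¹ := by
            rw [h3, ← div_eq_mul_inv, div_le_div_iff₀ hd (by positivity)]
            have : 6 * r * (1 + dist x a / r) = 6 * r + 6 * dist x a := by field_simp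
            rw [this]
            linarith
          gcongr
      _ = _ := by rw [mul_pow]


lemma lintegral_test {n : ℕ} {q : ℝ} (hq : (n : ℝ) / (n + 1) < q) (hq1 : q ≤ 1) {L0 : ℝ}
    (hL0 : 0 ≤ L0) : ∃ C : ℝ≥0∞, C ≠ ⊤ ∧ ∀ (u η : Eu n → ℝ) (L : ℝ≥0), LipschitzWith L u →
    Continuous η → (∀ x, 0 ≤ η x) → (∀ x, η x ≤ 1) → ∀ r : ℝ, 0 < r →
    (∀ x y, |η x - η y| ≤ L0 / r * dist x y) → ∀ a x0 : Eu n,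
    (∀ y ∉ closedBall a (2 * r), η y = 0) → dist x0 a ≤ r → u x0 ≠ 0 →
    ∫⁻ x, ENNReal.ofReal (sharp (fun y => η y * (1 - u y / u x0)) x) ^ q ≤
      C * (ENNReal.ofReal (r ^ n) * ENNReal.ofReal (|u x0|⁻¹) ^ q *
        (hlMax (fun y => ENNReal.ofReal (sharp u y ^ q)) x0 + ENNReal.ofReal (sharp u x0) ^ q)) := by
  have hq0 : 0 < q := lt_of_le_of_lt (by positivity) hq
  have hb := ubv_pos n
  set W : Eu n → ℝ≥0∞ := fun y => ENNReal.ofReal ((1 + ‖y‖) ^ (-((n + 1 : ℝ) * q))) with hW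
  have hWm : Measurable W := by fun_prop
  set I := ∫⁻ y, W y with hI
  have hIt : I < ⊤ := by
    refine finite_integral_one_add_norm ?_
    rw [finrank_euclideanSpace_fin]
    rw [div_lt_iff₀ (by positivity)] at hq
    linarith
  set A : ℝ := 1 + 5 * L0 * 2 ^ (n + 1) with hA
  have hA0 : 0 ≤ A := by positivity
  set E : ℝ := 8 ^ (n + 1) with hE
  have hE0 : 0 ≤ E := by positivity
  refine ⟨ENNReal.ofReal A ^ q * (ENNReal.ofReal (5 ^ n) + ENNReal.ofReal (ubv n * 4 ^ n)) +
    ENNReal.ofReal E ^ q * I, by finiteness, ?_⟩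
  intro u η L hL hη hη0 hη1 r hr hηΛ a x0 hηs hx0 hα
  obtain ⟨h1, h2⟩ := sharp_test hL hη hη0 hη1 hL0 hr hηΛ hηs hx0 hα
  set φ : Eu n → ℝ := fun y => η y * (1 - u y / u x0) with hφ
  set S0 := ENNReal.ofReal (sharp u x0) ^ q with hS0
  set α := ENNReal.ofReal (|u x0|⁻¹) ^ q with hαd
  set M := hlMax (fun y => ENNReal.ofReal (sharp u y ^ q)) x0 with hM
  have hSn := sharp_nonneg u
  have hSm := measurable_sharp hL
  have hnear : ∫⁻ x in closedBall a (4 * r), ENNReal.ofReal (sharp φ x) ^ q ≤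
      ENNReal.ofReal A ^ q * α * (ENNReal.ofReal ((5 * r) ^ n) * M +
        S0 * ENNReal.ofReal (ubv n * (4 * r) ^ n)) := by
    calc ∫⁻ x in closedBall a (4 * r), ENNReal.ofReal (sharp φ x) ^ q
        ≤ ∫⁻ x in closedBall a (4 * r), ENNReal.ofReal A ^ q * α *
            (ENNReal.ofReal (sharp u x ^ q) + S0) := by
          refine setLIntegral_mono' measurableSet_closedBall fun x hx => ?_
          refine (ENNReal.rpow_le_rpow (ENNReal.ofReal_le_ofReal (h1 x hx)) hq0.le).trans ?_
          rw [ENNReal.ofReal_mul hA0, ENNReal.ofReal_mul (by positivity),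
            ENNReal.mul_rpow_of_nonneg _ _ hq0.le, ENNReal.mul_rpow_of_nonneg _ _ hq0.le,
            ENNReal.ofReal_add (hSn x) (hSn x0), mul_assoc,
            ← ENNReal.ofReal_rpow_of_nonneg (hSn x) hq0.le]
          gcongr
          exact ENNReal.rpow_add_le_add_rpow _ _ hq0.le hq1
      _ = ENNReal.ofReal A ^ q * α * ((∫⁻ x in closedBall a (4 * r), ENNReal.ofReal (sharp u x ^ q))
            + S0 * ENNReal.ofReal (ubv n * (4 * r) ^ n)) := by
          rw [lintegral_const_mul' _ _ (by finiteness), lintegral_add_right _ measurable_const,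
            setLIntegral_const, vol_cball a (by positivity)]
      _ ≤ _ := by
          gcongr
          refine le_trans (lintegral_mono_set (closedBall_subset_closedBall' ?_))
            (lintegral_cball_le_hlMax _ x0 (R := 5 * r) (by positivity))
          rw [dist_comm]
          linarith
  have hfar : ∫⁻ x in (closedBall a (4 * r))ᶜ, ENNReal.ofReal (sharp φ x) ^ q ≤
      ENNReal.ofReal E ^ q * α * S0 * (ENNReal.ofReal (r ^ n) * I) := by
    calc ∫⁻ x in (closedBall a (4 * r))ᶜ, ENNReal.ofReal (sharp φ x) ^ q
        ≤ ∫⁻ x in (closedBall a (4 * r))ᶜ, ENNReal.ofReal E ^ q * α * S0 * W (r⁻¹ • (x - a)) := by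
          refine setLIntegral_mono' measurableSet_closedBall.compl fun x hx => ?_
          refine (ENNReal.rpow_le_rpow (ENNReal.ofReal_le_ofReal (h2 x hx)) hq0.le).trans
            (le_of_eq ?_)
          have h3 : ENNReal.ofReal ((1 + ‖r⁻¹ • (x - a)‖)⁻¹ ^ (n + 1)) ^ q =
              W (r⁻¹ • (x - a)) := by
            rw [ENNReal.ofReal_rpow_of_nonneg (by positivity) hq0.le, hW]
            dsimp only
            congr 1
            rw [← Real.rpow_natCast, ← Real.rpow_mul (by positivity), Real.inv_rpow (by positivity),
              Real.rpow_neg (by positivity)]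
            push_cast
            rfl
          rw [ENNReal.ofReal_mul (by positivity), ENNReal.ofReal_mul hE0,
            ENNReal.ofReal_mul (by positivity), ENNReal.mul_rpow_of_nonneg _ _ hq0.le,
            ENNReal.mul_rpow_of_nonneg _ _ hq0.le, ENNReal.mul_rpow_of_nonneg _ _ hq0.le, h3]
          ring
      _ ≤ ∫⁻ x, ENNReal.ofReal E ^ q * α * S0 * W (r⁻¹ • (x - a)) := setLIntegral_le_lintegral _ _
      _ = _ := by
          rw [lintegral_const_mul' _ _ (by finiteness), lintegral_scale hWm a hr]
  rw [← lintegral_add_compl _ (measurableSet_closedBall (x := a) (ε := 4 * r))]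
  refine (add_le_add hnear hfar).trans ?_
  have e5 : ENNReal.ofReal ((5 * r) ^ n) = ENNReal.ofReal (5 ^ n) * ENNReal.ofReal (r ^ n) := by
    rw [mul_pow, ENNReal.ofReal_mul (by positivity)]
  have e4 : ENNReal.ofReal (ubv n * (4 * r) ^ n) =
      ENNReal.ofReal (ubv n * 4 ^ n) * ENNReal.ofReal (r ^ n) := by
    rw [mul_pow, ← mul_assoc, ENNReal.ofReal_mul (by positivity)]
  rw [e5, e4]
  set X := ENNReal.ofReal (r ^ n) * α with hX
  set a1 := ENNReal.ofReal A ^ q * ENNReal.ofReal (5 ^ n)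
  set a2 := ENNReal.ofReal A ^ q * ENNReal.ofReal (ubv n * 4 ^ n)
  set a3 := ENNReal.ofReal E ^ q * I
  calc _ = X * (a1 * M + a2 * S0 + a3 * S0) := by simp only [X, a1, a2, a3]; ring
    _ ≤ X * (a1 * (M + S0) + a2 * (M + S0) + a3 * (M + S0)) := by
        gcongr
        · exact le_self_add
        · exact le_add_self
        · exact le_add_self
    _ = _ := by simp only [X, a1, a2, a3]; ring

lemma cap_le {n : ℕ} {q : ℝ} (hq : (n : ℝ) / (n + 1) < q) (hq1 : q ≤ 1)
    {ψ : Eu n → ℝ} (hψ : ContDiff ℝ (⊤ : ℕ∞) ψ) (hψsupp : tsupport ψ ⊆ ball 0 1) :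
    ∃ C : ℝ≥0∞, C ≠ ⊤ ∧ ∀ u : Eu n → ℝ, ContDiff ℝ (⊤ : ℕ∞) u → HasCompactSupport u →
    ∀ (K : Set (Eu n)) (a x0 : Eu n) (r : ℝ), 0 < r → dist x0 a ≤ r → u x0 ≠ 0 →
    (∀ y ∈ K, u y = 0) → hardyCap n ψ q (K ∩ closedBall a r) (ball a (2 * r)) ≤
      C * (ENNReal.ofReal (r ^ n) * ENNReal.ofReal (|u x0|⁻¹) ^ q *
        (hlMax (fun y => ENNReal.ofReal (sharp u y ^ q)) x0 + ENNReal.ofReal (sharp u x0) ^ q)) := by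
  have hq0 : 0 < q := lt_of_le_of_lt (by positivity) hq
  obtain ⟨η, L0, hηc, hη0, hη1, hηone, hηz, hηL⟩ := exists_cutoff n
  obtain ⟨C, hC, hmain⟩ := lintegral_test hq hq1 (L0 := L0) L0.2
  obtain ⟨D, hD0, hD1, hD2, hD3⟩ := exists_ker_consts hψ hψsupp
  refine ⟨n * (ENNReal.ofReal D ^ q * C), by finiteness, ?_⟩
  intro u hu hc K a x0 r hr hx0 hα hK
  obtain ⟨L, hL⟩ := exists_lip hu hc
  set ζ : Eu n → ℝ := fun y => η (r⁻¹ • (y - a)) with hζ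
  have hnorm : ∀ y, ‖r⁻¹ • (y - a)‖ = dist y a / r := by
    intro y
    rw [norm_smul, norm_inv, Real.norm_eq_abs, abs_of_pos hr, ← dist_eq_norm, div_eq_inv_mul]
  have hζc : ContDiff ℝ (⊤ : ℕ∞) ζ := hηc.comp ((contDiff_id.sub contDiff_const).const_smul r⁻¹)
  have hζz : ∀ y ∉ closedBall a (3 / 2 * r), ζ y = 0 := by
    intro y hy
    refine hηz _ fun h => hy ?_
    rw [mem_ball_zero_iff, hnorm, div_lt_iff₀ hr] at h
    exact h.le
  have hζz2 : ∀ y ∉ closedBall a (2 * r), ζ y = 0 := fun y hy =>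
    hζz y fun h => hy (closedBall_subset_closedBall (by linarith) h)
  have hζL : ∀ x y, |ζ x - ζ y| ≤ L0 / r * dist x y := by
    intro x y
    have h := hηL.dist_le_mul (r⁻¹ • (x - a)) (r⁻¹ • (y - a))
    rw [Real.dist_eq] at h
    refine h.trans (le_of_eq ?_)
    rw [dist_smul₀, dist_sub_right, norm_inv, Real.norm_eq_abs, abs_of_pos hr]
    ring
  set φ : Eu n → ℝ := fun y => ζ y * (1 - u y / u x0) with hφ
  have hφc : ContDiff ℝ (⊤ : ℕ∞) φ := hζc.mul (contDiff_const.sub (hu.div_const _))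
  have hφs : Function.support φ ⊆ closedBall a (3 / 2 * r) := by
    intro y hy
    by_contra h
    exact hy (by simp [hφ, hζz y h])
  have hφcs : HasCompactSupport φ :=
    HasCompactSupport.of_support_subset_isCompact (isCompact_closedBall _ _) hφs
  have hφt : tsupport φ ⊆ ball a (2 * r) :=
    (closure_minimal hφs isClosed_closedBall).trans (closedBall_subset_ball (by linarith))
  have hφ1 : ∀ x ∈ K ∩ closedBall a r, 1 ≤ φ x := by
    rintro x ⟨hxK, hxa⟩
    have h1 : ζ x = 1 := by
      refine hηone _ ?_
      rw [mem_closedBall_zero_iff, hnorm, div_le_one hr]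
      exact hxa
    simp [hφ, h1, hK x hxK]
  obtain ⟨L', hL'⟩ := exists_lip hφc hφcs
  have hle : hardyCap n ψ q (K ∩ closedBall a r) (ball a (2 * r)) ≤
      ∑ j : Fin n, ∫⁻ x, convMax n ψ φ j x ^ q :=
    sInf_le ⟨φ, hφc, hφcs, hφt, hφ1, rfl⟩
  have hm := hmain u ζ L hL hζc.continuous (fun x => hη0 _) (fun x => hη1 _) r hr hζL a x0 hζz2 hx0 hα
  refine hle.trans ?_
  calc ∑ j : Fin n, ∫⁻ x, convMax n ψ φ j x ^ q
      ≤ ∑ j : Fin n, ENNReal.ofReal D ^ q * ∫⁻ x, ENNReal.ofReal (sharp φ x) ^ q := by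
        refine Finset.sum_le_sum fun j _ => ?_
        rw [← lintegral_const_mul' _ _ (by finiteness)]
        refine lintegral_mono fun x => ?_
        rw [← ENNReal.mul_rpow_of_nonneg _ _ hq0.le, ← ENNReal.ofReal_mul hD0.le]
        exact ENNReal.rpow_le_rpow (convMax_le hψ hψsupp hφc hL' hD0.le hD2 j x) hq0.le
    _ = n * (ENNReal.ofReal D ^ q * ∫⁻ x, ENNReal.ofReal (sharp φ x) ^ q) := by simp
    _ ≤ n * (ENNReal.ofReal D ^ q * (C * (ENNReal.ofReal (r ^ n) * ENNReal.ofReal (|u x0|⁻¹) ^ q *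
        (hlMax (fun y => ENNReal.ofReal (sharp u y ^ q)) x0 + ENNReal.ofReal (sharp u x0) ^ q)))) := by
        gcongr
    _ = _ := by ring


lemma exists_frontier_dist {n : ℕ} (hn : 1 ≤ n) {Ω : Set (Eu n)} (hΩo : IsOpen Ω)
    (hΩb : Bornology.IsBounded Ω) {x : Eu n} (hx : x ∈ Ω) :
    ∃ a ∉ Ω, infDist x (frontier Ω) = dist x a := by
  haveI : Nonempty (Fin n) := ⟨⟨0, hn⟩⟩
  have hne : (frontier Ω).Nonempty := by
    rw [nonempty_frontier_iff]
    refine ⟨⟨x, hx⟩, ?_⟩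
    rintro rfl
    exact NormedSpace.unbounded_univ ℝ (Eu n) hΩb
  obtain ⟨a, ha, h⟩ := isClosed_frontier.exists_infDist_eq_dist hne x
  rw [hΩo.frontier_eq] at ha
  exact ⟨a, ha.2, h⟩

theorem hardy_inequality_of_uniformly_fat_complement
    (n : ℕ) (hn : 1 ≤ n) (q p : ℝ) (hq : (n : ℝ) / (n + 1) < q) (hqp : q < p)
    (hp : p ≤ 1)
    (ψ : EuclideanSpace ℝ (Fin n) → ℝ) (hψ : ContDiff ℝ (⊤ : ℕ∞) ψ)
    (hψsupp : tsupport ψ ⊆ ball 0 1) (hψint : ∫ x, ψ x = 1)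
    (Ω : Set (EuclideanSpace ℝ (Fin n))) (hΩo : IsOpen Ω) (hΩc : IsConnected Ω)
    (hΩb : Bornology.IsBounded Ω) (c : ℝ) (hc : 0 < c)
    (hfat : ∀ x ∉ Ω, ∀ r : ℝ, 0 < r →
      ENNReal.ofReal (c * r ^ ((n : ℝ) - q)) ≤
        hardyCap n ψ q (Ωᶜ ∩ closedBall x r) (ball x (2 * r))) :
    ∃ C : ℝ≥0∞, C ≠ ⊤ ∧
      ∀ u : EuclideanSpace ℝ (Fin n) → ℝ,
        ContDiff ℝ (⊤ : ℕ∞) u → HasCompactSupport u → tsupport u ⊆ Ω →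
        ∫⁻ x in Ω, ENNReal.ofReal (|u x| / infDist x (frontier Ω)) ^ p ≤
          C * ∑ j : Fin n, ∫⁻ x, convMax n ψ u j x ^ p := by
  have hq0 : 0 < q := lt_of_le_of_lt (by positivity) hq
  have hp0 : 0 < p := hq0.trans hqp
  have hs1 : 1 < p / q := (one_lt_div hq0).2 hqp
  obtain ⟨C1, hC1, hcap⟩ := cap_le hq (hqp.le.trans hp) hψ hψsupp
  obtain ⟨C2, hC2, hsh⟩ := sharp_le_hardy hn (hq.trans hqp) hp hψ hψsupp hψint
  obtain ⟨Q, hQ0, hQ⟩ := hl_strong hn hs1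
  have hc' : ENNReal.ofReal c ≠ 0 := (ENNReal.ofReal_pos.2 hc).ne'
  set C3 := C1 / ENNReal.ofReal c with hC3
  have hC3t : C3 ≠ ⊤ := ENNReal.div_ne_top hC1 hc'
  set C4 := C3 ^ (p / q) * 2 ^ (p / q - 1) with hC4
  have hC4t : C4 ≠ ⊤ := by
    refine ENNReal.mul_ne_top (ENNReal.rpow_ne_top_of_nonneg (by positivity) hC3t)
      (ENNReal.rpow_ne_top_of_nonneg (by linarith) (by simp))
  refine ⟨C4 * (ENNReal.ofReal Q + 1) * C2, by finiteness, fun u hu hcs hsupp => ?_⟩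
  obtain ⟨L, hL⟩ := exists_lip hu hcs
  have hS0 := sharp_nonneg u
  have hSm := measurable_sharp hL
  have hu0 : ∀ y ∈ Ωᶜ, u y = 0 := fun y hy =>
    image_eq_zero_of_notMem_tsupport fun h => hy (hsupp h)
  set M := hlMax (fun y => ENNReal.ofReal (sharp u y ^ q)) with hM
  have hpt : ∀ x ∈ Ω, ENNReal.ofReal (|u x| / infDist x (frontier Ω)) ^ p ≤
      C4 * (M x ^ (p / q) + ENNReal.ofReal (sharp u x) ^ p) := by
    intro x hx
    by_cases hux : u x = 0
    · simp [hux, hp0]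
    obtain ⟨a, ha, hr⟩ := exists_frontier_dist hn hΩo hΩb hx
    have hr0 : 0 < dist x a := dist_pos.2 fun h => ha (h ▸ hx)
    rw [hr]
    set r := dist x a with hrdef
    have hα : 0 < |u x| := abs_pos.2 hux
    have h1 := (hfat a ha r hr0).trans (hcap u hu hcs Ωᶜ a x r hr0 le_rfl hux hu0)
    set Z := ENNReal.ofReal (r ^ n) * ENNReal.ofReal (|u x|⁻¹) ^ q with hZ
    have hZe : Z = ENNReal.ofReal (r ^ n * (|u x|⁻¹) ^ q) := by
      rw [hZ, ENNReal.ofReal_rpow_of_nonneg (by positivity) hq0.le,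
        ENNReal.ofReal_mul (by positivity)]
    have hZ0 : Z ≠ 0 := by
      rw [hZe]
      exact (ENNReal.ofReal_pos.2 (by positivity)).ne'
    have hZt : Z ≠ ⊤ := by rw [hZe]; exact ENNReal.ofReal_ne_top
    have h2 : ENNReal.ofReal (c * r ^ ((n : ℝ) - q)) =
        Z * (ENNReal.ofReal (|u x| / r) ^ q * ENNReal.ofReal c) := by
      rw [hZe, ENNReal.ofReal_rpow_of_nonneg (by positivity) hq0.le,
        ← ENNReal.ofReal_mul (by positivity), ← ENNReal.ofReal_mul (by positivity)]
      congr 1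
      rw [Real.rpow_sub hr0, Real.rpow_natCast, Real.div_rpow hα.le hr0.le,
        Real.inv_rpow hα.le]
      field_simp
    have h3 : ENNReal.ofReal (|u x| / r) ^ q * ENNReal.ofReal c ≤
        C1 * (M x + ENNReal.ofReal (sharp u x) ^ q) := by
      rw [h2] at h1
      refine (ENNReal.mul_le_mul_iff_right hZ0 hZt).1 (h1.trans (le_of_eq ?_))
      ring
    have h4 : ENNReal.ofReal (|u x| / r) ^ q ≤
        C3 * (M x + ENNReal.ofReal (sharp u x) ^ q) := by
      rw [← ENNReal.le_div_iff_mul_le (Or.inl hc') (Or.inl ENNReal.ofReal_ne_top)] at h3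
      refine h3.trans (le_of_eq ?_)
      rw [hC3, div_eq_mul_inv, div_eq_mul_inv]
      ring
    have e1 : ∀ z : ℝ≥0∞, (z ^ q) ^ (p / q) = z ^ p := by
      intro z
      rw [← ENNReal.rpow_mul]
      congr 1
      field_simp
    calc ENNReal.ofReal (|u x| / r) ^ p = (ENNReal.ofReal (|u x| / r) ^ q) ^ (p / q) := (e1 _).symm
      _ ≤ (C3 * (M x + ENNReal.ofReal (sharp u x) ^ q)) ^ (p / q) :=
          ENNReal.rpow_le_rpow h4 (by positivity)
      _ = C3 ^ (p / q) * (M x + ENNReal.ofReal (sharp u x) ^ q) ^ (p / q) :=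
          ENNReal.mul_rpow_of_nonneg _ _ (by positivity)
      _ ≤ C3 ^ (p / q) * (2 ^ (p / q - 1) * (M x ^ (p / q) +
            (ENNReal.ofReal (sharp u x) ^ q) ^ (p / q))) := by
          gcongr
          exact ENNReal.rpow_add_le_mul_rpow_add_rpow _ _ hs1.le
      _ = _ := by rw [e1, hC4]; ring
  set I := ∫⁻ x, ENNReal.ofReal (sharp u x) ^ p with hI
  have hMI : ∫⁻ x, M x ^ (p / q) ≤ ENNReal.ofReal Q * I := by
    refine (hQ (fun y => sharp u y ^ q) (hSm.pow_const q) (fun y => Real.rpow_nonneg (hS0 y) _)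
      ⟨(L * ubv n) ^ q, fun y => Real.rpow_le_rpow (hS0 y) (sharp_le_lip hL y) hq0.le⟩).trans
      (le_of_eq ?_)
    simp only [ofReal_rpow_rpow_div (hS0 _) hq0]
    rfl
  calc ∫⁻ x in Ω, ENNReal.ofReal (|u x| / infDist x (frontier Ω)) ^ p
      ≤ ∫⁻ x in Ω, C4 * (M x ^ (p / q) + ENNReal.ofReal (sharp u x) ^ p) :=
        setLIntegral_mono' hΩo.measurableSet hpt
    _ ≤ ∫⁻ x, C4 * (M x ^ (p / q) + ENNReal.ofReal (sharp u x) ^ p) := setLIntegral_le_lintegral _ _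
    _ = C4 * ((∫⁻ x, M x ^ (p / q)) + I) := by
        rw [lintegral_const_mul' _ _ hC4t,
          lintegral_add_left ((measurable_hlMax _).pow_const _)]
    _ ≤ C4 * (ENNReal.ofReal Q * I + I) := by gcongr
    _ = C4 * (ENNReal.ofReal Q + 1) * I := by ring
    _ ≤ C4 * (ENNReal.ofReal Q + 1) * (C2 * ∑ j : Fin n, ∫⁻ x, convMax n ψ u j x ^ p) := by
        gcongr
        exact hsh u hu hcs
    _ = _ := by ring
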